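/- arXiv:1812.04539 — 4 statements merged into one kernel-verified Lean document; each statement's English description precedes it below -/
import Mathlib

section
/- For all integers n, m, k with 2 ≤ m ≤ n and 2 ≤ k ≤ 2^(m-1)+1, the 2-adic valuation of the unsigned Stirling number of the first kind s(2^n, 2^m - k) equals 2^n - 2^m - (n-m)(2^m - 2⌊k/2⌋) + m - 2 - v₂(⌊k/2⌋) + (n-1)·ε, where ε = 0 if k is even and ε = 1 if k is odd. -/
/-! Write `N = 2 ^ n`, `P_n(x) = x(x+1)⋯(x+N-1) = ∑ s(N,l) x^l` and `E_n(y) = P_n(y) P_n(-y)`, an even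
polynomial. Splitting the product for `P_{n+1}` in two and reflecting one half gives
`P_{n+1}(x) / x = E_n(x+N) / (x+N)` (`Q_succ`), that is
`s(2N, l+1) = ∑_k [y^(k+1)] E_n · N^(k-l) · binom(k,l)` (`st_succ`), in which only odd `k` contribute.

The proof is an induction on `n`. For even `x` with `2 ≤ x ≤ N` and `L = ⌊log₂ x⌋`, put
`F n x = 2^n - x(n-1) + (x+1)L - 2·2^L - v₂(x)`. The claim (`IH`) is `v₂ s(N,x) = F n x` and
`v₂ s(N,x-1) = F n x + n - 1`; the theorem is the case `x = 2^m - 2⌊k/2⌋`, where `L = m - 1`.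

* From `E_n` to `P_{n+1}` (`st_step`): if `v₂([y^x] E_n) = F (n+1) x` for every even `x`, then the
  lowest nonzero term of the sum for `s(2N, x)` or `s(2N, x-1)` strictly dominates `2`-adically,
  since `F` decreases slowly enough (`F_shift`).
* From `P_n` to `E_n` (`VEq_E`): `[y^c] E_n = ∑ (-1)^j s(N,i) s(N,j)` over `i + j = c`. For `c ≥ 4`
  the terms with `i, j` odd are negligible (`F_odd_pair`). The even ones, multiplied by `c`, sum to
  `∑ 2 i s(N,i) s(N,j)` by symmetry (`sum_weighted`). There the factor `i` cancels the `-v₂(i)` in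
  `F n i`, and a single term survives: the one whose `j` is a certain power of two, `peak c`
  (`F_even_pair_peak`, `F_even_pair_lt`). For `c = 2` the only nonzero term is `-s(N,1)^2`.

The inequalities on `F` rest on one fact: for even `x`, the function `L ↦ (x+1)L - 2·2^L` has its
strict maximum over the natural numbers at `L = ⌊log₂ x⌋` (`hh_lt`). -/


open Polynomial Finset

/-- Unsigned Stirling number of the first kind: coefficient of `x^k` in
`x(x+1)⋯(x+n-1)`. -/
noncomputable def sF (n k : ℕ) : ℕ :=
  (∏ i ∈ Finset.range n, (X + C i : Polynomial ℕ)).coeff k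

/-- The `m`-th Stirling number of the first kind: coefficient of `x^k` in
`(x+m)(x+m+1)⋯(x+m+n-1)`. -/
noncomputable def sM (m n k : ℕ) : ℕ :=
  (∏ i ∈ Finset.range n, (X + C (m + i) : Polynomial ℕ)).coeff k

/-- `H n k`: the `k`-th elementary symmetric function of `1, 1/2, …, 1/n`. -/
def Hfun (n k : ℕ) : ℚ :=
  ((Finset.Icc 1 n).val.map (fun i => (1 : ℚ) / i)).esymm k

/-! ### Calculus of 2-adic valuations -/

/-- The `2`-adic valuation of `a` is exactly `e`, expressed through the norm; in particular
`a ≠ 0`. -/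
def VEq (a : ℚ) (e : ℤ) : Prop := padicNorm 2 a = 2 ^ (-e)

/-- The `2`-adic valuation of `a` is at least `e`, with the valuation of `0` taken to be infinite. -/
def VGe (a : ℚ) (e : ℤ) : Prop := padicNorm 2 a ≤ 2 ^ (-e)

theorem VEq.ge {a : ℚ} {e : ℤ} (h : VEq a e) : VGe a e := le_of_eq h

theorem VGe.mono {a : ℚ} {e f : ℤ} (h : VGe a e) (hf : f ≤ e) : VGe a f :=
  le_trans h (zpow_le_zpow_right₀ (by norm_num) (by omega))

theorem VGe.zero (e : ℤ) : VGe 0 e := by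
  unfold VGe; rw [padicNorm.zero]; positivity

theorem VEq.mul {a b : ℚ} {e f : ℤ} (ha : VEq a e) (hb : VEq b f) : VEq (a * b) (e + f) := by
  unfold VEq at *
  rw [padicNorm.mul, ha, hb, ← zpow_add₀ (by norm_num)]; congr 1; ring

theorem VGe.mul {a b : ℚ} {e f : ℤ} (ha : VGe a e) (hb : VGe b f) : VGe (a * b) (e + f) := by
  unfold VGe at *
  rw [padicNorm.mul, neg_add, zpow_add₀ (by norm_num)]
  exact mul_le_mul ha hb (padicNorm.nonneg _) (by positivity)

theorem VEq.neg {a : ℚ} {e : ℤ} (ha : VEq a e) : VEq (-a) e := by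
  unfold VEq at *; rw [padicNorm.neg, ha]

theorem VGe.neg {a : ℚ} {e : ℤ} (ha : VGe a e) : VGe (-a) e := by
  unfold VGe at *; rw [padicNorm.neg]; exact ha

theorem VEq.add {a b : ℚ} {e : ℤ} (ha : VEq a e) (hb : VGe b (e + 1)) : VEq (a + b) e := by
  have hlt : padicNorm 2 b < padicNorm 2 a := by
    rw [ha]
    exact lt_of_le_of_lt hb (zpow_lt_zpow_right₀ (by norm_num) (by omega))
  unfold VEq
  rw [padicNorm.add_eq_max_of_ne hlt.ne', max_eq_left hlt.le, ha]

theorem VGe.sum {ι : Type*} {s : Finset ι} {f : ι → ℚ} {e : ℤ} (h : ∀ i ∈ s, VGe (f i) e) :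
    VGe (∑ i ∈ s, f i) e :=
  padicNorm.sum_le' h (by positivity)

/-- A sum with a single term of minimal valuation has the valuation of that term. -/
theorem VEq.sum {ι : Type*} [DecidableEq ι] {s : Finset ι} {f : ι → ℚ} {e : ℤ} {i₀ : ι}
    (hi₀ : i₀ ∈ s) (h₀ : VEq (f i₀) e) (h : ∀ i ∈ s, i ≠ i₀ → VGe (f i) (e + 1)) :
    VEq (∑ i ∈ s, f i) e := by
  rw [← Finset.add_sum_erase _ _ hi₀]
  refine h₀.add (VGe.sum fun i hi => ?_)
  exact h i (Finset.mem_of_mem_erase hi) (Finset.ne_of_mem_erase hi)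

theorem VEq.natCast {a : ℕ} (ha : a ≠ 0) : VEq a (padicValNat 2 a) := by
  unfold VEq
  rw [padicNorm.eq_zpow_of_nonzero (by exact_mod_cast ha), padicValRat.of_nat]; rfl

theorem VGe.natCast (a : ℕ) : VGe a 0 := by
  unfold VGe; simpa using padicNorm.of_nat (p := 2) a

theorem VEq.two_pow (n : ℕ) : VEq (2 ^ n) n := by
  have := VEq.natCast (a := 2 ^ n) (by positivity)
  rw [padicValNat.prime_pow] at this
  exact_mod_cast this

theorem VEq.padicValNat_eq {a : ℕ} {e : ℤ} (h : VEq a e) : (padicValNat 2 a : ℤ) = e := by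
  have ha : a ≠ 0 := by
    rintro rfl
    unfold VEq at h
    rw [Nat.cast_zero, padicNorm.zero] at h
    have : (0:ℚ) < 2 ^ (-e) := by positivity
    linarith
  have h2 := VEq.natCast ha
  unfold VEq at h h2
  have := zpow_right_injective₀ (by norm_num : (0:ℚ) < 2) (by norm_num) (h2.symm.trans h)
  simpa using this

theorem VEq.of_mul_left {a b : ℚ} {e f : ℤ} (ha : VEq a e) (hab : VEq (a * b) (e + f)) :
    VEq b f := by
  unfold VEq at *
  rw [padicNorm.mul, ha, neg_add, zpow_add₀ (by norm_num)] at hab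
  exact mul_left_cancel₀ (by positivity) hab

/-! ### The valuation function and its convexity -/

/-- The part of the valuation formula depending on the dyadic scale `L`, as a function of a free
scale `L`. -/
def hh (x L : ℕ) : ℤ := (x + 1) * L - 2 * 2 ^ L

/-- The valuation of `s(2 ^ n, x)` for even `x` with `2 ≤ x ≤ 2 ^ n`. -/
def F (n x : ℕ) : ℤ :=
  2 ^ n - x * ((n : ℤ) - 1) + hh x (Nat.log 2 x) - padicValNat 2 x

theorem hh_succ (x L : ℕ) : hh x (L + 1) = hh x L + (x + 1 - 2 ^ (L + 1)) := by
  unfold hh; push_cast; ring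

theorem hh_up {x : ℕ} (a d : ℕ) (h : 2 ^ (a + d) ≤ x) : hh x a + d ≤ hh x (a + d) := by
  induction d with
  | zero => simp
  | succ d ih =>
    have h1 : 2 ^ (a + d) ≤ x := le_trans (Nat.pow_le_pow_right (by norm_num) (by omega)) h
    have := ih h1
    rw [← add_assoc, hh_succ]
    have : ((2 : ℤ) ^ (a + d + 1)) ≤ x := by exact_mod_cast h
    push_cast; linarith

theorem hh_down {x : ℕ} (hx : Even x) (a d : ℕ) (h : x < 2 ^ (a + 1)) :
    hh x (a + d) + d ≤ hh x a := by
  induction d with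
  | zero => simp
  | succ d ih =>
    rw [← add_assoc, hh_succ]
    have h2 : x < 2 ^ (a + d + 1) := lt_of_lt_of_le h (Nat.pow_le_pow_right (by norm_num) (by omega))
    have h3 : x + 2 ≤ 2 ^ (a + d + 1) := by
      rw [pow_succ] at *
      obtain ⟨t, rfl⟩ := hx
      omega
    have : (x : ℤ) + 2 ≤ 2 ^ (a + d + 1) := by exact_mod_cast h3
    push_cast; linarith

theorem hh_lt {x a : ℕ} (hx : Even x) (h0 : x ≠ 0) (ha : a ≠ Nat.log 2 x) :
    hh x a + 1 ≤ hh x (Nat.log 2 x) := by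
  have h1 := Nat.pow_log_le_self 2 h0
  have h2 := Nat.lt_pow_succ_log_self (b := 2) (by norm_num) x
  rcases lt_or_gt_of_ne ha with h | h
  · obtain ⟨d, hd⟩ := Nat.exists_eq_add_of_lt h
    have := hh_up (x := x) a (d + 1) (by rw [← add_assoc, ← hd]; exact h1)
    rw [← add_assoc, ← hd] at this
    push_cast at this; omega
  · obtain ⟨d, hd⟩ := Nat.exists_eq_add_of_lt h
    have := hh_down hx _ (d + 1) h2
    rw [← add_assoc, ← hd] at this
    push_cast at this; omega

theorem hh_le {x : ℕ} (a : ℕ) (hx : Even x) (h0 : x ≠ 0) : hh x a ≤ hh x (Nat.log 2 x) := by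
  by_cases h : a = Nat.log 2 x
  · rw [h]
  · have := hh_lt hx h0 h; omega

theorem one_le_val {x : ℕ} (hx : Even x) (h0 : x ≠ 0) : 1 ≤ padicValNat 2 x :=
  one_le_padicValNat_of_dvd h0 hx.two_dvd

theorem pow_val_le {x : ℕ} (h0 : x ≠ 0) : 2 ^ padicValNat 2 x ≤ x :=
  Nat.le_of_dvd (Nat.pos_of_ne_zero h0) pow_padicValNat_dvd

/-- Replacing `x` by `x + 2 * b` lowers `F (n + 1)` by less than the valuation of
`(2 ^ n) ^ (2 * b)`. -/
theorem F_shift (n : ℕ) {x b : ℕ} (hx : Even x) (h0 : x ≠ 0) (hb : 1 ≤ b) :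
    F (n + 1) x + 1 ≤ F (n + 1) (x + 2 * b) + 2 * b * n := by
  set y := x + 2 * b with hy
  have hye : Even y := hx.add (even_two_mul b)
  have hy0 : y ≠ 0 := by omega
  set L := Nat.log 2 x with hL
  have h1 := hh_le L hye hy0
  have hL1 : 1 ≤ L := Nat.log_pos (by norm_num) (by obtain ⟨t, rfl⟩ := hx; omega)
  have hvx := one_le_val hx h0
  have key : padicValNat 2 y < 2 * b * L + padicValNat 2 x := by
    have h2 := Nat.lt_pow_succ_log_self (b := 2) (by norm_num) x
    have h3 := pow_val_le hy0
    have hbL : b ≤ b * L := Nat.le_mul_of_pos_right _ hL1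
    have hbL' : L ≤ b * L := Nat.le_mul_of_pos_left _ hb
    have e1 : 2 * b * L = 2 * (b * L) := by ring
    by_cases hw : padicValNat 2 y ≤ L + 1
    · omega
    · obtain ⟨d, hd⟩ := Nat.exists_eq_add_of_lt (not_le.mp hw)
      have h4 : padicValNat 2 y ≤ 2 ^ (L + 1 + d) := by
        have := Nat.lt_two_pow_self (n := L + 1 + d)
        omega
      have h5 : 2 ^ (L + 1) ≤ 2 ^ (L + 1 + d) := Nat.pow_le_pow_right (by norm_num) (by omega)
      rw [← hL, Nat.succ_eq_add_one] at h2
      rw [hd, pow_succ] at h3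
      omega
  have key' : (padicValNat 2 y : ℤ) + 1 ≤ 2 * b * L + padicValNat 2 x := by exact_mod_cast key
  have h6 : hh y L = hh x L + 2 * b * L := by
    unfold hh; rw [hy]; push_cast; ring
  unfold F
  rw [← hL]
  have hyc : (y : ℤ) = x + 2 * b := by rw [hy]; push_cast; ring
  rw [hyc]
  push_cast
  linarith

/-- Products of two odd-indexed Stirling numbers are negligible: with `u = i + 1`, `v = j + 1`, the
right-hand side is the valuation of `s(2 ^ n, i) * s(2 ^ n, j)`, where `i + j = c`. -/
theorem F_odd_pair (n : ℕ) {c u v : ℕ} (hc4 : 4 ≤ c) (hc : Even c) (hu : Even u) (hv : Even v)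
    (hu0 : u ≠ 0) (hv0 : v ≠ 0) (huv : u + v = c + 2) :
    F (n + 1) c + 1 ≤ F n u + F n v + 2 * n - 2 := by
  obtain ⟨a, ha⟩ : ∃ a, Nat.log 2 c = a + 1 :=
    ⟨Nat.log 2 c - 1, by have := Nat.log_pos (b := 2) (n := c) (by norm_num) (by omega); omega⟩
  have ha1 : 1 ≤ a := by
    have := Nat.le_log_of_pow_le (b := 2) (x := 2) (y := c) (by norm_num) (by omega)
    omega
  have hlt := Nat.lt_pow_succ_log_self (b := 2) (by norm_num) c
  rw [ha, Nat.succ_eq_add_one] at hlt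
  -- valuation `a + 1` forces `x ≥ 2 ^ (a + 1)`, which costs at least one unit in `hh`
  have aux : ∀ x : ℕ, Even x → x ≠ 0 → x ≤ c →
      hh x a + padicValNat 2 x ≤ hh x (Nat.log 2 x) + a := by
    intro x hx hx0 hxc
    have h1 := pow_val_le hx0
    have h2 : padicValNat 2 x ≤ a + 1 := by
      by_contra h
      have : 2 ^ (a + 1 + 1) ≤ 2 ^ padicValNat 2 x := Nat.pow_le_pow_right (by norm_num) (by omega)
      omega
    by_cases h3 : padicValNat 2 x ≤ a
    · have := hh_le a hx hx0; omega
    · have h4 : padicValNat 2 x = a + 1 := by omega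
      have h5 := Nat.le_log_of_pow_le (b := 2) (by norm_num) (h4 ▸ h1)
      have := hh_lt (a := a) hx hx0 (by omega)
      omega
  have hu2 := hu.two_dvd
  have hv2 := hv.two_dvd
  have h1 := aux u hu hu0 (by omega)
  have h2 := aux v hv hv0 (by omega)
  have h3 := one_le_val hc (by omega)
  have h3' : (1 : ℤ) ≤ padicValNat 2 c := by exact_mod_cast h3
  have ha1' : (1 : ℤ) ≤ a := by exact_mod_cast ha1
  have h4 : hh c (a + 1) = hh u a + hh v a + c + 1 - 3 * a := by
    unfold hh
    have : (c : ℤ) = u + v - 2 := by omega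
    rw [this]; push_cast; ring
  unfold F
  rw [ha, h4]
  have : (c : ℤ) = u + v - 2 := by omega
  rw [this, Nat.cast_succ, pow_succ]
  linarith

/-- The index `j` of the dominating term in `∑ 2 * i * s(2 ^ n, i) * s(2 ^ n, j)` over even `i`, `j`
with `i + j = c`, for even `c ≥ 4`: the power of two for which the other index `c - j` lies in the dyadic interval
`[2 ^ a, 2 ^ (a + 1))`, where `a + 1 = log₂ c`. -/
def peak (c : ℕ) : ℕ :=
  if c < 3 * 2 ^ (Nat.log 2 c - 1) then 2 ^ (Nat.log 2 c - 1) else 2 ^ Nat.log 2 c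

/-- The valuation of `2 * i * s(2 ^ n, i) * s(2 ^ n, j)` compared with that of
`c * [y ^ c] E n`, relative to the scale `a` just below that of `c`. For even nonzero `i`, `j`
the two `hh` differences are nonnegative, and vanish only when `i`, respectively `j`, has scale `a`. -/
theorem F_even_pair (n : ℕ) {c i j a : ℕ} (hij : i + j = c) (ha : Nat.log 2 c = a + 1) :
    1 + padicValNat 2 i + F n i + F n j = padicValNat 2 c + F (n + 1) c +
      (a - padicValNat 2 j + (hh i (Nat.log 2 i) - hh i a) + (hh j (Nat.log 2 j) - hh j a)) := by
  have h4 : hh c (a + 1) = hh i a + hh j a + c + 1 - a := by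
    unfold hh
    rw [← hij]; push_cast; ring
  unfold F
  rw [ha, h4, ← hij]
  push_cast
  ring

theorem peak_spec {c : ℕ} (hc4 : 4 ≤ c) (hc : Even c) :
    ∃ a, Nat.log 2 c = a + 1 ∧ 1 ≤ a ∧ 2 ^ (a + 1) ≤ c ∧ c + 2 ≤ 2 ^ (a + 2) ∧
      peak c = if c < 3 * 2 ^ a then 2 ^ a else 2 ^ (a + 1) := by
  obtain ⟨a, ha⟩ : ∃ a, Nat.log 2 c = a + 1 :=
    ⟨Nat.log 2 c - 1, by have := Nat.log_pos (b := 2) (n := c) (by norm_num) (by omega); omega⟩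
  have ha1 : 1 ≤ a := by
    have := Nat.le_log_of_pow_le (b := 2) (x := 2) (y := c) (by norm_num) (by omega)
    omega
  have hlt := Nat.lt_pow_succ_log_self (b := 2) (by norm_num) c
  have hge := Nat.pow_log_le_self 2 (x := c) (by omega)
  rw [ha] at hlt hge
  refine ⟨a, ha, ha1, hge, ?_, ?_⟩
  · have := hc.two_dvd
    rw [Nat.succ_eq_add_one, pow_succ] at hlt
    rw [pow_succ]
    omega
  · unfold peak; rw [ha]; simp

theorem log_eq {x a : ℕ} (h1 : 2 ^ a ≤ x) (h2 : x < 2 ^ (a + 1)) : Nat.log 2 x = a :=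
  Nat.log_eq_of_pow_le_of_lt_pow h1 h2

theorem F_even_pair_peak (n : ℕ) {c i j : ℕ} (hc4 : 4 ≤ c) (hc : Even c) (hij : i + j = c)
    (hj : j = peak c) :
    1 + padicValNat 2 i + F n i + F n j = padicValNat 2 c + F (n + 1) c := by
  obtain ⟨a, ha, ha1, hge, hlt, hp⟩ := peak_spec hc4 hc
  rw [F_even_pair n hij ha]
  rw [hp] at hj
  have e1 : 2 ^ (a + 1) = 2 * 2 ^ a := by ring
  have e2 : 2 ^ (a + 2) = 4 * 2 ^ a := by ring
  split_ifs at hj with h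
  · have hi : Nat.log 2 i = a := log_eq (by omega) (by omega)
    rw [hi, hj, padicValNat.prime_pow, Nat.log_pow (by norm_num)]
    ring
  · have hi : Nat.log 2 i = a := log_eq (by omega) (by omega)
    rw [hi, hj, padicValNat.prime_pow, Nat.log_pow (by norm_num), hh_succ]
    push_cast
    ring

theorem F_even_pair_lt (n : ℕ) {c i j : ℕ} (hc4 : 4 ≤ c) (hij : i + j = c)
    (hi : Even i) (hje : Even j) (hi0 : i ≠ 0) (hj0 : j ≠ 0) (hj : j ≠ peak c) :
    padicValNat 2 c + F (n + 1) c + 1 ≤ 1 + padicValNat 2 i + F n i + F n j := by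
  have hc : Even c := hij ▸ hi.add hje
  obtain ⟨a, ha, ha1, hge, hlt, hp⟩ := peak_spec hc4 hc
  rw [F_even_pair n hij ha]
  rw [hp] at hj
  have e1 : 2 ^ (a + 1) = 2 * 2 ^ a := by ring
  have e2 : 2 ^ (a + 2) = 4 * 2 ^ a := by ring
  have hi' := hh_le a hi hi0
  have hj' := hh_le a hje hj0
  obtain ⟨t, ht⟩ := pow_padicValNat_dvd (p := 2) (n := j)
  set v := padicValNat 2 j with hv
  have ht0 : t ≠ 0 := by rintro rfl; omega
  have htv : 2 ^ v ≤ 2 ^ v * t := Nat.le_mul_of_pos_right _ (by omega)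
  have hilt := Nat.lt_pow_succ_log_self (b := 2) (by norm_num) i
  have hige := Nat.pow_log_le_self 2 hi0
  have hjlt := Nat.lt_pow_succ_log_self (b := 2) (by norm_num) j
  have hjge := Nat.pow_log_le_self 2 hj0
  have hva : v ≤ a + 1 := by
    by_contra h
    have : 2 ^ (a + 2) ≤ 2 ^ v := Nat.pow_le_pow_right (by norm_num) (by omega)
    omega
  -- the excess is at least `a - v`, so only `v = a` and `v = a + 1` need a gain from `hh`
  rcases (by omega : v < a ∨ v = a ∨ v = a + 1) with h | h | h
  · omega
  · rw [h] at ht htv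
    by_cases hlj : Nat.log 2 j = a
    · rw [hlj, Nat.succ_eq_add_one] at hjlt
      have ht1 : t = 1 := by
        by_contra hne
        have : 2 ^ a * 2 ≤ 2 ^ a * t := Nat.mul_le_mul_left _ (by omega)
        omega
      rw [ht1, mul_one] at ht
      have hli : Nat.log 2 i ≠ a := by
        intro hli
        rw [hli, Nat.succ_eq_add_one] at hilt
        rw [if_pos (by omega)] at hj
        exact hj ht
      have := hh_lt hi hi0 (Ne.symm hli)
      omega
    · have := hh_lt hje hj0 (Ne.symm hlj)
      omega
  · rw [h] at ht htv
    have ht1 : t = 1 := by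
      by_contra hne
      have : 2 ^ (a + 1) * 2 ≤ 2 ^ (a + 1) * t := Nat.mul_le_mul_left _ (by omega)
      omega
    rw [ht1, mul_one] at ht
    have hlj : Nat.log 2 j = a + 1 := by rw [ht, Nat.log_pow (by norm_num)]
    have h6 := hh_lt (a := a) hje hj0 (by omega)
    have hli : Nat.log 2 i ≠ a := by
      intro hli
      rw [hli] at hige
      rw [if_neg (by omega)] at hj
      exact hj ht
    have := hh_lt hi hi0 (Ne.symm hli)
    omega

/-! ### The polynomial recursion -/

/-- The rising factorial `x(x+1)⋯(x+2^n-1)` over `ℚ`. -/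
noncomputable def P (n : ℕ) : ℚ[X] := ∏ i ∈ range (2 ^ n), (X + C (i : ℚ))

/-- `P n` divided by `x`. -/
noncomputable def Q (n : ℕ) : ℚ[X] := ∏ i ∈ range (2 ^ n - 1), (X + C ((i + 1 : ℕ) : ℚ))

/-- The even polynomial `P_n(y) P_n(-y)`. -/
noncomputable def E (n : ℕ) : ℚ[X] := P n * (P n).comp (-X)

/-- The odd polynomial `E n` divided by `y`. -/
noncomputable def O (n : ℕ) : ℚ[X] := Q n * (P n).comp (-X)

theorem P_eq (n : ℕ) : P n = X * Q n := by
  unfold P Q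
  have h : 2 ^ n = (2 ^ n - 1) + 1 := (Nat.sub_add_cancel Nat.one_le_two_pow).symm
  conv_lhs => rw [h]
  rw [prod_range_succ']
  simp [mul_comm]

theorem E_eq (n : ℕ) : E n = X * O n := by
  unfold E O; conv_lhs => rw [P_eq]
  rw [P_eq, mul_assoc]

theorem natDegree_P (n : ℕ) : (P n).natDegree = 2 ^ n := by
  unfold P
  rw [natDegree_prod_of_monic _ _ fun i _ => monic_X_add_C _]
  simp only [natDegree_X_add_C, sum_const, card_range, smul_eq_mul, mul_one]

theorem natDegree_Q (n : ℕ) : (Q n).natDegree = 2 ^ n - 1 := by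
  unfold Q
  rw [natDegree_prod_of_monic _ _ fun i _ => monic_X_add_C _]
  simp only [natDegree_X_add_C, sum_const, card_range, smul_eq_mul, mul_one]

theorem natDegree_O_lt (n : ℕ) : (O n).natDegree < 2 ^ (n + 1) := by
  have h1 : ((P n).comp (-X)).natDegree = 2 ^ n := by
    rw [natDegree_comp, natDegree_P, natDegree_neg, natDegree_X, mul_one]
  have h2 : (O n).natDegree ≤ _ := natDegree_mul_le
  rw [h1, natDegree_Q] at h2
  have := Nat.one_le_two_pow (n := n)
  rw [pow_succ]
  omega

theorem coeff_comp_neg (p : ℚ[X]) (k : ℕ) : (p.comp (-X)).coeff k = (-1) ^ k * p.coeff k := by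
  have : (-X : ℚ[X]) = C (-1) * X := by simp
  rw [this, comp_C_mul_X_coeff, mul_comm]

/-- The lower half `(x+1)⋯(x+N)` of the product is `P_n(-y)` at `y = x + N`, by reflection and because
`N = 2 ^ n` is even; the upper half is `Q_n(y)`. -/
theorem Q_succ {n : ℕ} (hn : 1 ≤ n) : Q (n + 1) = (O n).comp (X + C (2 ^ n)) := by
  have hev : Even (2 ^ n) := (even_two.pow_of_ne_zero (by omega))
  have h1 : ((P n).comp (-X)).comp (X + C (2 ^ n)) =
      ∏ i ∈ range (2 ^ n), (X + C ((i + 1 : ℕ) : ℚ)) := by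
    rw [← prod_range_reflect]
    unfold P
    rw [comp_assoc, Polynomial.prod_comp]
    have : ∀ i ∈ range (2 ^ n), (X + C (i : ℚ)).comp ((-X : ℚ[X]).comp (X + C (2 ^ n)))
        = - (X + C ((2 ^ n - 1 - i + 1 : ℕ) : ℚ)) := by
      intro i hi
      have hi := mem_range.mp hi
      have e : 2 ^ n - 1 - i + 1 = 2 ^ n - i := by omega
      rw [e, Nat.cast_sub hi.le]
      simp only [add_comp, X_comp, C_comp, neg_comp]
      push_cast
      simp only [map_sub]
      ring
    rw [prod_congr rfl this, prod_neg, card_range, hev.neg_one_pow, one_mul]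
  unfold O
  rw [mul_comp, h1]
  have h : 2 ^ (n + 1) - 1 = 2 ^ n + (2 ^ n - 1) := by
    have := Nat.one_le_two_pow (n := n)
    rw [pow_succ]; omega
  unfold Q
  rw [h, prod_range_add, mul_comm, Polynomial.prod_comp]
  congr 1
  refine prod_congr rfl fun i _ => ?_
  simp only [add_comp, X_comp, C_comp]
  push_cast
  simp only [map_add]
  ring

/-- The Stirling number `s(2 ^ n, l)` as a rational number. -/
noncomputable def st (n l : ℕ) : ℚ := (P n).coeff l

theorem st_zero (n : ℕ) : st n 0 = 0 := by
  unfold st; rw [P_eq, mul_coeff_zero, coeff_X_zero, zero_mul]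

theorem st_big {n l : ℕ} (h : 2 ^ n < l) : st n l = 0 :=
  coeff_eq_zero_of_natDegree_lt (by rw [natDegree_P]; exact h)

theorem E_odd {n l : ℕ} (hl : Odd l) : (E n).coeff l = 0 := by
  have h : (E n).comp (-X) = E n := by
    unfold E
    rw [mul_comp, comp_neg_X_comp_neg_X, mul_comm]
  have h2 := coeff_comp_neg (E n) l
  rw [h, hl.neg_one_pow] at h2
  linarith

theorem st_succ {n : ℕ} (hn : 1 ≤ n) (l : ℕ) :
    st (n + 1) (l + 1) = ∑ k ∈ range (2 ^ (n + 1)),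
      (E n).coeff (k + 1) * ((2 ^ n) ^ (k - l) * (k.choose l : ℚ)) := by
  unfold st
  rw [P_eq, coeff_X_mul, Q_succ hn, comp_eq_sum_left, sum_over_range' _ (by simp) _ (natDegree_O_lt n),
    finsetSum_coeff]
  refine sum_congr rfl fun k _ => ?_
  rw [coeff_C_mul, coeff_X_add_C_pow, E_eq, coeff_X_mul]

theorem E_coeff (n l : ℕ) :
    (E n).coeff l = ∑ p ∈ HasAntidiagonal.antidiagonal l, (-1) ^ p.2 * (st n p.1 * st n p.2) := by
  unfold E
  rw [coeff_mul]
  refine sum_congr rfl fun p _ => ?_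
  rw [coeff_comp_neg]; unfold st; ring

/-! ### The induction -/

/-- The valuations of all `s(2 ^ n, l)` with `1 ≤ l ≤ 2 ^ n`, grouped as `l = x` and `l = x - 1` for
even `x`. -/
def IH (n : ℕ) : Prop := ∀ x, Even x → x ≠ 0 → x ≤ 2 ^ n →
  VEq (st n x) (F n x) ∧ VEq (st n (x - 1)) (F n x + n - 1)

theorem IH_one : IH 1 := by
  intro x hx h0 hx2
  have : x = 2 := by
    obtain ⟨t, rfl⟩ := hx; omega
  subst this
  have hP : P 1 = X * (X + 1) := by
    unfold P; simp [prod_range_succ]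
  have h2 : st 1 2 = 1 := by
    unfold st; rw [hP, coeff_X_mul]; simp [coeff_one]
  have h1 : st 1 1 = 1 := by
    unfold st; rw [hP, coeff_X_mul]; simp
  have hF : F 1 2 = 0 := by
    unfold F hh
    have : Nat.log 2 2 = 1 := by norm_num
    rw [this, padicValNat.self (by norm_num)]; norm_num
  rw [h2, h1, hF]
  have := VEq.two_pow 0
  simpa using this

/-- Lower bounds from `IH n` that need no upper bound on the index, because the Stirling numbers vanish
beyond `2 ^ n`. -/
theorem VGe_st {n x : ℕ} (hn : 1 ≤ n) (h : IH n) (hx : Even x) (h0 : x ≠ 0) :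
    VGe (st n x) (F n x) ∧ VGe (st n (x - 1)) (F n x + n - 1) := by
  by_cases hx2 : x ≤ 2 ^ n
  · exact ⟨(h x hx h0 hx2).1.ge, (h x hx h0 hx2).2.ge⟩
  · refine ⟨?_, ?_⟩
    · rw [st_big (by omega)]; exact VGe.zero _
    · have : Even (2 ^ n) := even_two.pow_of_ne_zero (by omega)
      have := this.two_dvd
      have := hx.two_dvd
      rw [st_big (by omega)]; exact VGe.zero _

theorem VEq_E_two {n : ℕ} (hn : 1 ≤ n) (h : IH n) : VEq ((E n).coeff 2) (F (n + 1) 2) := by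
  have h1 : (E n).coeff 2 = -(st n 1 * st n 1) := by
    rw [E_coeff, Nat.sum_antidiagonal_eq_sum_range_succ_mk]
    simp [sum_range_succ, st_zero]
  have h2 : F (n + 1) 2 = (F n 2 + n - 1) + (F n 2 + n - 1) := by
    unfold F; rw [show Nat.log 2 2 = 1 by norm_num, padicValNat.self (by norm_num)]
    unfold hh; push_cast; ring
  have h3 := (h 2 even_two (by norm_num) (by
    calc 2 = 2 ^ 1 := rfl
      _ ≤ 2 ^ n := Nat.pow_le_pow_right (by norm_num) hn)).2
  rw [h1, h2]
  exact (h3.mul h3).neg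

/-- Swapping the two indices turns the weight `c = i + j` into `2 * i`. -/
theorem sum_weighted (n : ℕ) {c : ℕ} (hc : Even c) :
    (c : ℚ) * ∑ p ∈ HasAntidiagonal.antidiagonal c with Even p.1, st n p.1 * st n p.2 =
      ∑ p ∈ HasAntidiagonal.antidiagonal c with Even p.1, 2 * (p.1 : ℚ) * (st n p.1 * st n p.2) := by
  have hswap : ∑ p ∈ HasAntidiagonal.antidiagonal c with Even p.1, (p.1 : ℚ) * (st n p.1 * st n p.2) =
      ∑ p ∈ HasAntidiagonal.antidiagonal c with Even p.1, (p.2 : ℚ) * (st n p.1 * st n p.2) := by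
    refine sum_nbij' Prod.swap Prod.swap ?_ ?_ ?_ ?_ ?_
    all_goals simp only [mem_filter, HasAntidiagonal.mem_antidiagonal, Prod.fst_swap, Prod.snd_swap, Prod.swap_swap]
    · rintro p ⟨rfl, h⟩; exact ⟨add_comm _ _, (Nat.even_add.mp hc).mp h⟩
    · rintro p ⟨rfl, h⟩; exact ⟨add_comm _ _, (Nat.even_add.mp hc).mp h⟩
    · simp
    · simp
    · intros; ring
  have : ∑ p ∈ HasAntidiagonal.antidiagonal c with Even p.1, 2 * (p.1 : ℚ) * (st n p.1 * st n p.2) =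
      ∑ p ∈ HasAntidiagonal.antidiagonal c with Even p.1, (p.1 : ℚ) * (st n p.1 * st n p.2) +
      ∑ p ∈ HasAntidiagonal.antidiagonal c with Even p.1, (p.2 : ℚ) * (st n p.1 * st n p.2) := by
    rw [← hswap, ← sum_add_distrib]
    refine sum_congr rfl fun _ _ => by ring
  rw [this, ← sum_add_distrib, mul_sum]
  refine sum_congr rfl fun p hp => ?_
  rw [← (HasAntidiagonal.mem_antidiagonal.mp (mem_filter.mp hp).1)]
  push_cast; ring

/-- The even coefficients of `E n` already have the valuations claimed for `P (n + 1)`. -/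
theorem VEq_E {n c : ℕ} (hn : 1 ≤ n) (h : IH n) (hc : Even c) (h0 : c ≠ 0) (hc2 : c ≤ 2 ^ (n + 1)) :
    VEq ((E n).coeff c) (F (n + 1) c) := by
  by_cases hc4 : c < 4
  · have : c = 2 := by obtain ⟨t, rfl⟩ := hc; omega
    subst this
    exact VEq_E_two hn h
  push Not at hc4
  have split : (E n).coeff c = ∑ p ∈ HasAntidiagonal.antidiagonal c with Even p.1, st n p.1 * st n p.2 +
      -(∑ p ∈ HasAntidiagonal.antidiagonal c with ¬ Even p.1, st n p.1 * st n p.2) := by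
    rw [E_coeff, ← sum_filter_add_sum_filter_not _ (fun p : ℕ × ℕ => Even p.1), ← sum_neg_distrib]
    congr 1
    · refine sum_congr rfl fun p hp => ?_
      obtain ⟨hp, hp'⟩ := mem_filter.mp hp
      have := HasAntidiagonal.mem_antidiagonal.mp hp
      have : Even p.2 := (Nat.even_add.mp (this ▸ hc)).mp hp'
      rw [this.neg_one_pow, one_mul]
    · refine sum_congr rfl fun p hp => ?_
      obtain ⟨hp, hp'⟩ := mem_filter.mp hp
      have := HasAntidiagonal.mem_antidiagonal.mp hp
      have : ¬ Even p.2 := fun h2 => hp' ((Nat.even_add.mp (this ▸ hc)).mpr h2)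
      rw [(Nat.not_even_iff_odd.mp this).neg_one_pow]; ring
  rw [split]
  refine VEq.add ?_ (VGe.neg (VGe.sum fun p hp => ?_))
  · refine VEq.of_mul_left (VEq.natCast h0) ?_
    rw [sum_weighted n hc]
    have hval : ∀ i : ℕ, i ≠ 0 → VEq (2 * (i : ℚ)) (1 + padicValNat 2 i) := fun i hi => by
      have := (VEq.two_pow 1).mul (VEq.natCast hi)
      simpa using this
    obtain ⟨a, ha, ha1, hge, hlt, hp⟩ := peak_spec hc4 hc
    have e1 : 2 ^ (a + 1) = 2 * 2 ^ a := by ring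
    have e2 : 2 ^ (a + 2) = 4 * 2 ^ a := by ring
    have hpe : Even (peak c) := by
      rw [hp]; split_ifs
      · exact even_two.pow_of_ne_zero (by omega)
      · exact even_two.pow_of_ne_zero (by omega)
    have e3 : a ≤ n := by
      have : 2 ^ (a + 1) ≤ 2 ^ (n + 1) := hge.trans hc2
      have := (Nat.pow_le_pow_iff_right (a := 2) (by norm_num)).mp this
      omega
    have e4 : 2 ^ a ≤ 2 ^ n := Nat.pow_le_pow_right (by norm_num) e3
    have e5 : 2 ^ (n + 1) = 2 * 2 ^ n := by ring
    have e6 : a = n ∨ 2 ^ (a + 1) ≤ 2 ^ n := by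
      rcases e3.eq_or_lt with h | h
      · exact Or.inl h
      · exact Or.inr (Nat.pow_le_pow_right (by norm_num) h)
    have hbounds : peak c < c ∧ peak c ≤ 2 ^ n ∧ c - peak c ≤ 2 ^ n ∧ peak c ≠ 0 := by
      have := Nat.two_pow_pos a
      rw [hp]
      rcases e6 with rfl | e6
      · rw [if_pos (by omega)]; omega
      · split_ifs <;> omega
    obtain ⟨b1, b2, b3, b4⟩ := hbounds
    have hie : Even (c - peak c) := (Nat.even_sub b1.le).mpr (iff_of_true hc hpe)
    refine VEq.sum (i₀ := (c - peak c, peak c)) ?_ ?_ ?_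
    · simp only [mem_filter, HasAntidiagonal.mem_antidiagonal]
      exact ⟨by omega, hie⟩
    · have := (hval (c - peak c) (by omega)).mul
        ((h _ hie (by omega) b3).1.mul (h _ hpe b4 b2).1)
      rw [← F_even_pair_peak n hc4 hc (i := c - peak c) (j := peak c) (by omega) rfl]
      convert this using 1; ring
    · rintro ⟨i, j⟩ hij hne
      simp only [mem_filter, HasAntidiagonal.mem_antidiagonal] at hij
      obtain ⟨hij, hi⟩ := hij
      have hj : Even j := (Nat.even_add.mp (hij ▸ hc)).mp hi
      dsimp only
      by_cases hi0 : i = 0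
      · rw [hi0, st_zero]; simpa using VGe.zero _
      by_cases hj0 : j = 0
      · rw [hj0, st_zero]; simpa using VGe.zero _
      have hjp : j ≠ peak c := by
        rintro rfl
        exact hne (Prod.ext (by simp only; omega) rfl)
      refine ((hval i hi0).ge.mul ((VGe_st hn h hi hi0).1.mul (VGe_st hn h hj hj0).1)).mono ?_
      have := F_even_pair_lt n hc4 hij hi hj hi0 hj0 hjp
      linarith
  · obtain ⟨hp, hp'⟩ := mem_filter.mp hp
    have hsum := HasAntidiagonal.mem_antidiagonal.mp hp
    have hp2 : ¬ Even p.2 := fun h2 => hp' ((Nat.even_add.mp (hsum ▸ hc)).mpr h2)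
    have hu : Even (p.1 + 1) := (Nat.not_even_iff_odd.mp hp').add_one
    have hv : Even (p.2 + 1) := (Nat.not_even_iff_odd.mp hp2).add_one
    have h1 := (VGe_st hn h hu (by omega)).2
    have h2 := (VGe_st hn h hv (by omega)).2
    refine (h1.mul h2).mono ?_
    have := F_odd_pair n hc4 hc hu hv (by omega) (by omega) (by omega)
    linarith

/-- The inductive step, for the even index `x` (`δ = 0`) and the odd index `x - 1` (`δ = 1`). -/
theorem st_step {n x δ : ℕ} (hn : 1 ≤ n) (h : IH n) (hx : Even x) (h0 : x ≠ 0)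
    (hx2 : x ≤ 2 ^ (n + 1)) (hδ : δ = 0 ∨ δ = 1) :
    VEq (st (n + 1) (x - δ)) (F (n + 1) x + δ * n) := by
  have hx22 := hx.two_dvd
  obtain ⟨l, hl⟩ : ∃ l, x = l + 1 + δ := ⟨x - 1 - δ, by omega⟩
  have hl' : x - δ = l + 1 := by omega
  rw [hl', st_succ hn]
  have hpow : ∀ e : ℕ, VEq (((2 : ℚ) ^ n) ^ e) (n * e) := fun e => by
    rw [← pow_mul]; simpa using VEq.two_pow (n * e)
  refine VEq.sum (i₀ := l + δ) (by rw [mem_range]; omega) ?_ ?_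
  · have hch : VEq ((l + δ).choose l : ℚ) 0 := by
      rcases hδ with rfl | rfl
      · simpa using VEq.two_pow 0
      · have hodd : ¬ 2 ∣ (l + 1) := by omega
        have := VEq.natCast (a := l + 1) (by omega)
        rw [padicValNat.eq_zero_of_not_dvd hodd] at this
        simpa using this
    have hE := VEq_E hn h hx h0 hx2
    have e1 : l + δ + 1 = x := by omega
    have e2 : l + δ - l = δ := by omega
    rw [e1, e2]
    convert hE.mul ((hpow δ).mul hch) using 1
    ring
  · intro k hk hne
    rw [mem_range] at hk
    by_cases hkl : k < l
    · rw [Nat.choose_eq_zero_of_lt hkl]; simpa using VGe.zero _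
    by_cases hodd : Odd (k + 1)
    · rw [E_odd hodd]; simpa using VGe.zero _
    have hev : Even (k + 1) := Nat.not_odd_iff_even.mp hodd
    have hkev := hev.two_dvd
    obtain ⟨b, hb⟩ : ∃ b, k + 1 = x + 2 * b := ⟨(k + 1 - x) / 2, by omega⟩
    have hE := VEq_E hn h hev (by omega) (by omega)
    refine (hE.ge.mul ((hpow _).ge.mul (VGe.natCast _))).mono ?_
    have := F_shift n (b := b) hx h0 (by omega)
    rw [hb]
    have e2 : k - l = 2 * b + δ := by omega
    rw [e2]; push_cast
    linarith

theorem IH_all {n : ℕ} (hn : 1 ≤ n) : IH n := by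
  induction n, hn using Nat.le_induction with
  | base => exact IH_one
  | succ n hn ih =>
    intro x hx h0 hx2
    have h1 := st_step hn ih hx h0 hx2 (Or.inl rfl)
    have h2 := st_step hn ih hx h0 hx2 (Or.inr rfl)
    refine ⟨by simpa using h1, ?_⟩
    convert h2 using 1
    push_cast; ring

/-! ### Translation to the stated formula -/

theorem sF_cast (n l : ℕ) : (sF (2 ^ n) l : ℚ) = st n l := by
  have h : P n = (∏ i ∈ Finset.range (2 ^ n), (X + C i : Polynomial ℕ)).map (Nat.castRingHom ℚ) := by
    rw [Polynomial.map_prod]; unfold P; simp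
  unfold sF st
  rw [h, coeff_map]; rfl

theorem padicValNat_pow_sub {m j : ℕ} (h0 : j ≠ 0) (h : 2 * j < 2 ^ m) :
    padicValNat 2 (2 ^ m - 2 * j) = padicValNat 2 j + 1 := by
  have h1 : VEq ((2 * j : ℕ) : ℚ) (padicValNat 2 j + 1 : ℕ) := by
    have := VEq.natCast (a := 2 * j) (by omega)
    rw [padicValNat.mul (by norm_num) h0, padicValNat.self (by norm_num), add_comm] at this
    exact this
  have hlt : padicValNat 2 j + 1 < m := by
    have := pow_val_le h0
    have h2 : 2 ^ (padicValNat 2 j + 1) < 2 ^ m := by rw [pow_succ]; omega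
    exact (Nat.pow_lt_pow_iff_right (by norm_num)).mp h2
  have h2 := h1.neg.add ((VEq.two_pow m).ge.mono (by exact_mod_cast hlt))
  have h3 : ((2 ^ m - 2 * j : ℕ) : ℚ) = -((2 * j : ℕ) : ℚ) + 2 ^ m := by
    rw [Nat.cast_sub h.le]; push_cast; ring
  rw [← h3] at h2
  exact_mod_cast h2.padicValNat_eq

theorem stmt0 (n m k : ℕ) (hm : 2 ≤ m) (hmn : m ≤ n)
    (hk : 2 ≤ k) (hk' : k ≤ 2 ^ (m - 1) + 1) :
    (padicValNat 2 (sF (2 ^ n) (2 ^ m - k)) : ℤ) =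
      2 ^ n - 2 ^ m - ((n : ℤ) - m) * (2 ^ m - 2 * (k / 2 : ℕ))
        + m - 2 - padicValNat 2 (k / 2) + ((n : ℤ) - 1) * (if Even k then 0 else 1) := by
  obtain ⟨a, rfl⟩ : ∃ a, m = a + 1 := ⟨m - 1, by omega⟩
  rw [Nat.add_sub_cancel] at hk'
  have he : 2 ∣ 2 ^ a := dvd_pow_self 2 (by omega)
  have e1 : 2 ^ (a + 1) = 2 * 2 ^ a := by ring
  have hjk := Nat.div_add_mod k 2
  have hmod := Nat.mod_lt k (by norm_num : 2 > 0)
  -- the even index attached to `2 ^ m - k` is `2 ^ m - 2 * j`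
  set j := k / 2 with hj
  have hj2 : 2 * j ≤ 2 ^ a := by omega
  have hpos := Nat.two_pow_pos a
  have hxle : 2 ^ (a + 1) - 2 * j ≤ 2 ^ n :=
    (Nat.sub_le _ _).trans (Nat.pow_le_pow_right (by norm_num) hmn)
  have hxe : Even (2 ^ (a + 1) - 2 * j) := by rw [even_iff_two_dvd]; omega
  obtain ⟨g1, g2⟩ := IH_all (n := n) (by omega) _ hxe (by omega) hxle
  have hlog : Nat.log 2 (2 ^ (a + 1) - 2 * j) = a := log_eq (by omega) (by omega)
  have hF : F n (2 ^ (a + 1) - 2 * j) =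
      2 ^ n - 2 ^ (a + 1) - ((n : ℤ) - (a + 1 : ℕ)) * (2 ^ (a + 1) - 2 * (j : ℕ))
        + (a + 1 : ℕ) - 2 - padicValNat 2 j := by
    unfold F
    rw [hlog, padicValNat_pow_sub (by omega) (by omega)]
    unfold hh
    rw [Nat.cast_sub (by omega)]
    simp only [Nat.cast_add, Nat.cast_mul, Nat.cast_pow, Nat.cast_ofNat, Nat.cast_one]
    ring
  rw [← hF]
  by_cases hkev : Even k
  · rw [if_pos hkev]
    have : 2 ^ (a + 1) - k = 2 ^ (a + 1) - 2 * j := by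
      have := Nat.even_iff.mp hkev; omega
    rw [this]
    rw [← sF_cast] at g1
    rw [g1.padicValNat_eq]; ring
  · rw [if_neg hkev]
    have : 2 ^ (a + 1) - k = 2 ^ (a + 1) - 2 * j - 1 := by
      have := Nat.odd_iff.mp (Nat.not_even_iff_odd.mp hkev); omega
    rw [this]
    rw [← sF_cast] at g2
    rw [g2.padicValNat_eq]; ring
end

section
/- For all positive integers n and k with k ≤ 2^n, v₂(s(2^n + 1, k + 1)) = v₂(s(2^n, k)), where s denotes the unsigned Stirling number of the first kind and v₂ the 2-adic valuation. -/
open Polynomial Finset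

/-!
Write `a_k = s(2^n, k)` and `v` for the 2-adic valuation. Since
`s(2^n + 1, k + 1) = a_k + 2^n a_{k+1}`, it suffices that `v(a_k) < n + v(a_{k+1})` for
`1 ≤ k < 2^n` (`padicVal_lt`; for `k = 2^n` the second term vanishes). This is proved by downward
induction on `k`.

For odd `k`, the symmetry `x ↦ -x - 2^n` of the factors `x + 1, …, x + 2^n - 1` yields
`2 a_k = 2^n k a_{k+1} + ∑_{t ≥ 0} c_t 2^{n(t+2)} a_{k+2+t}` with integers `c_t` (`reflection`). By
the inequality at larger indices the first term dominates, so `v(a_k) = n - 1 + v(a_{k+1})`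
(`padicVal_odd`).

For even `k`, the valuation of `k a_k` is an explicit piecewise linear function `expo n k`
(`expo_spec`). The proof is an induction on `n`: the factors `x + i` with `i` even and with `i` odd
give `f_{n+1}(x) = 2^{2^n} f_n(x/2) P(x)`, where `f_n = x(x+1)⋯(x+2^n-1)` and
`P = (x+1)(x+3)⋯(x+2^{n+1}-1)`. The derivative `P'` is `2^n` times a polynomial congruent modulo
`2` to `x + x^3 + ⋯ + x^{2^n-1}` (`derivative_oddPoly`), and so for even `k` only one term of the
convolution for `k s(2^{n+1}, k)` attains the minimal valuation. Applying the odd case at `k + 1` and these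
formulas at `k` and `k + 2`, the inequality for even `k` becomes the elementary estimate
`expo_drop`.
-/

/-! ### The product over odd numbers -/

/-- The rising factorial `x(x+1)⋯(x+N-1)` over `ℤ`, whose coefficients are the `sF N k`. -/
noncomputable def risingPoly (N : ℕ) : ℤ[X] := ∏ i ∈ Finset.range N, (X + C (i : ℤ))

/-- The product `(x+1)(x+3)⋯(x+2^(n+1)-1)`, of degree `2^n`. -/
noncomputable def oddPoly (n : ℕ) : ℤ[X] := ∏ i ∈ Finset.range (2 ^ n), (X + C (2 * (i : ℤ) + 1))

theorem coeff_risingPoly (N k : ℕ) : (risingPoly N).coeff k = (sF N k : ℤ) := by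
  have h : risingPoly N
      = (∏ i ∈ Finset.range N, (X + C i : Polynomial ℕ)).map (Nat.castRingHom ℤ) := by
    simp [risingPoly, Polynomial.map_prod]
  rw [h, coeff_map]
  rfl

theorem risingPoly_monic (N : ℕ) : (risingPoly N).Monic :=
  monic_prod_of_monic _ _ fun _ _ => monic_X_add_C _

theorem oddPoly_monic (n : ℕ) : (oddPoly n).Monic :=
  monic_prod_of_monic _ _ fun _ _ => monic_X_add_C _

theorem risingPoly_natDegree (N : ℕ) : (risingPoly N).natDegree = N := by
  rw [risingPoly, natDegree_prod_of_monic _ _ fun _ _ => monic_X_add_C _]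
  simp only [natDegree_X_add_C, sum_const, card_range, smul_eq_mul, mul_one]

theorem oddPoly_natDegree (n : ℕ) : (oddPoly n).natDegree = 2 ^ n := by
  rw [oddPoly, natDegree_prod_of_monic _ _ fun _ _ => monic_X_add_C _]
  simp only [natDegree_X_add_C, sum_const, card_range, smul_eq_mul, mul_one]

theorem oddPoly_succ (n : ℕ) :
    oddPoly (n + 1) = oddPoly n * (oddPoly n).comp (X + C (2 ^ (n + 1))) := by
  rw [oddPoly, pow_succ, mul_two, Finset.prod_range_add, oddPoly, Polynomial.prod_comp]
  congr 1
  refine Finset.prod_congr rfl fun i _ => ?_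
  simp only [add_comp, X_comp, C_comp, add_assoc, ← C_add]
  congr 2
  push_cast
  ring

theorem C_dvd_shift_sub (f : ℤ[X]) (c : ℤ) : C c ∣ f.comp (X + C c) - f := by
  have h := Polynomial.sub_dvd_eval_sub (X + C c) X (f.map (C : ℤ →+* ℤ[X]))
  simpa [eval_map, ← Polynomial.comp.eq_1] using h

theorem oddPoly_mod_two (n : ℕ) : C (2 : ℤ) ∣ oddPoly n - (1 + X ^ 2 ^ n) := by
  rw [C_dvd_iff_dvd_coeff]
  have h : (oddPoly n - (1 + X ^ 2 ^ n)).map (Int.castRingHom (ZMod 2)) = 0 := by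
    have h2 : (2 : ZMod 2) = 0 := rfl
    have : ∀ i ∈ Finset.range (2 ^ n), ((X + C (2 * (i : ℤ) + 1)).map (Int.castRingHom (ZMod 2)))
        = (X + 1 : (ZMod 2)[X]) := by
      intro i _
      rw [Polynomial.map_add, map_X, map_C]
      have : (Int.castRingHom (ZMod 2)) (2 * (i : ℤ) + 1) = 1 := by
        simp only [map_add, map_mul, map_ofNat, map_one, h2, zero_mul, zero_add]
      rw [this, C_1]
    rw [Polynomial.map_sub, oddPoly, Polynomial.map_prod, Finset.prod_congr rfl this]
    simp [add_pow_char_pow, add_comm]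
  intro i
  have := congrArg (fun p => p.coeff i) h
  simp only [coeff_map, coeff_zero] at this
  exact (ZMod.intCast_zmod_eq_zero_iff_dvd _ 2).1 (by simpa using this)

/-- The derivative of `oddPoly n` is `2^n (x + x^3 + ⋯ + x^(2^n-1))` modulo `2^(n+1)`. With
`oddPoly_succ`, the inductive step amounts to `(P²)' = 2 P P'` modulo `2^(n+2)`, combined with
`P ≡ 1 + x^(2^n)` modulo `2`. -/
theorem derivative_oddPoly (n : ℕ) (hn : 1 ≤ n) : ∃ R : ℤ[X],
    derivative (oddPoly n)
      = C (2 ^ n) * (∑ i ∈ Finset.range (2 ^ (n - 1)), X ^ (2 * i + 1) + C 2 * R) := by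
  induction n, hn using Nat.le_induction with
  | base =>
    refine ⟨1, ?_⟩
    have : oddPoly 1 = X ^ 2 + C 4 * X + C 3 := by
      simp only [oddPoly, pow_one, Finset.prod_range_succ, Finset.prod_range_zero]
      simp
      ring
    rw [this]
    simp
    ring
  | succ n hn ih =>
    obtain ⟨R, hR⟩ := ih
    set O : ℤ[X] := ∑ i ∈ Finset.range (2 ^ (n - 1)), X ^ (2 * i + 1) with hO
    have hO' : ∑ i ∈ Finset.range (2 ^ (n + 1 - 1)), (X : ℤ[X]) ^ (2 * i + 1)
        = O * (1 + X ^ 2 ^ n) := by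
      obtain ⟨m, rfl⟩ : ∃ m, n = m + 1 := ⟨n - 1, by omega⟩
      simp only [Nat.add_sub_cancel] at *
      rw [pow_succ, mul_two, Finset.sum_range_add, ← hO, mul_add, mul_one, hO, Finset.sum_mul]
      congr 1
      refine Finset.sum_congr rfl fun i _ => ?_
      rw [← pow_add]
      congr 1
      ring
    obtain ⟨S, hS⟩ := oddPoly_mod_two n
    obtain ⟨T₁, h₁⟩ := C_dvd_shift_sub (oddPoly n) (2 ^ (n + 1))
    obtain ⟨T₂, h₂⟩ := C_dvd_shift_sub (O + C 2 * R) (2 ^ (n + 1))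
    have h₁ := eq_add_of_sub_eq h₁
    have h₂ := eq_add_of_sub_eq h₂
    have hS := eq_add_of_sub_eq hS
    rw [hO', oddPoly_succ, derivative_mul, derivative_comp, hR, mul_comp, C_comp, h₁, h₂]
    obtain ⟨m, rfl⟩ : ∃ m, n = m + 1 := ⟨n - 1, by omega⟩
    refine ⟨R * oddPoly (m + 1) + O * S + C (2 ^ m) * ((O + C 2 * R) * T₁ + oddPoly (m + 1) * T₂),
      ?_⟩
    rw [derivative_add, derivative_X, derivative_C, add_zero, one_mul]
    simp only [C_pow]
    generalize oddPoly (m + 1) = P at *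
    have e : O * (1 + X ^ 2 ^ (m + 1)) = O * (P - C 2 * S) := by rw [hS]; ring
    rw [e]
    have h2 : (C 2 : ℤ[X]) = 2 := rfl
    rw [h2]
    ring

theorem oddPoly_coeff_dvd (n i : ℕ) (hn : 1 ≤ n) :
    (2 : ℤ) ^ n ∣ i * (oddPoly n).coeff i := by
  rcases i with _ | i
  · simp
  obtain ⟨R, hR⟩ := derivative_oddPoly n hn
  have h := congrArg (fun p => p.coeff i) hR
  simp only [coeff_derivative, coeff_C_mul] at h
  refine ⟨_, Eq.trans ?_ h⟩
  push_cast
  ring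

theorem oddPoly_coeff_even (n i : ℕ) (hn : 1 ≤ n) (h0 : 0 < i) (hi : i ≤ 2 ^ n) (he : Even i) :
    ∃ u : ℤ, Odd u ∧ i * (oddPoly n).coeff i = 2 ^ n * u := by
  obtain ⟨R, hR⟩ := derivative_oddPoly n hn
  obtain ⟨j, rfl⟩ : ∃ j, i = 2 * j + 1 + 1 := by
    obtain ⟨r, hr⟩ := he
    exact ⟨r - 1, by omega⟩
  have h := congrArg (fun p => p.coeff (2 * j + 1)) hR
  have hj : j < 2 ^ (n - 1) := by
    have : 2 ^ n = 2 * 2 ^ (n - 1) := by rw [← pow_succ']; congr 1; omega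
    omega
  simp only [coeff_derivative, coeff_C_mul, coeff_add, finsetSum_coeff, coeff_X_pow] at h
  have hs : ∑ x ∈ Finset.range (2 ^ (n - 1)), (if 2 * j + 1 = 2 * x + 1 then (1 : ℤ) else 0)
      = 1 := by
    rw [Finset.sum_eq_single j]
    · simp
    · intro b _ hb
      rw [if_neg (by omega)]
    · intro hb
      simp [hj] at hb
  rw [hs] at h
  refine ⟨_, ⟨R.coeff (2 * j + 1), rfl⟩, ?_⟩
  push_cast at h ⊢
  linear_combination h

/-- Separating the even from the odd numbers below `2^(n+1)`. Scaling the roots by `2` multiplies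
the coefficient of `x^l` by `2^(2^n - l)`. -/
theorem risingPoly_double (n : ℕ) :
    risingPoly (2 ^ (n + 1)) = (risingPoly (2 ^ n)).scaleRoots 2 * oddPoly n := by
  have hsc : ∀ N : ℕ, (risingPoly N).scaleRoots 2
      = ∏ i ∈ Finset.range N, (X + C (2 * (i : ℤ))) := by
    intro N
    induction N with
    | zero => simp [risingPoly]
    | succ N ih =>
      rw [risingPoly, Finset.prod_range_succ, mul_scaleRoots_of_noZeroDivisors, ← risingPoly, ih,
        X_add_C_scaleRoots, Finset.prod_range_succ, mul_comm (N : ℤ) 2]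
  have hsplit : ∀ N : ℕ, risingPoly (2 * N)
      = ∏ i ∈ Finset.range N, ((X + C (2 * (i : ℤ))) * (X + C (2 * (i : ℤ) + 1))) := by
    intro N
    induction N with
    | zero => simp [risingPoly]
    | succ N ih =>
      rw [Finset.prod_range_succ, ← ih, risingPoly, risingPoly, Nat.mul_succ,
        Finset.prod_range_succ, Finset.prod_range_succ]
      push_cast
      ring
  rw [pow_succ', hsplit, hsc, oddPoly, Finset.prod_mul_distrib]

/-! ### The exact valuation of `k * s(2^n, k)` for even `k` -/

/-- The piecewise linear exponent `E n k`, meaningful for `1 ≤ k ≤ 2^n`: by `expo_spec` it bounds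
`v₂(k * s(2^n, k))` from below, with equality for even `k`. The recursion in `n` reflects
`risingPoly_double`. -/
def expo : ℕ → ℕ → ℕ
  | 0, _ => 0
  | n + 1, k =>
    if k ≤ 2 ^ n then expo n k + (2 ^ n - k) else if k < 2 ^ (n + 1) then n else n + 1

theorem expo_succ_of_le {n k : ℕ} (h : k ≤ 2 ^ n) : expo (n + 1) k = expo n k + (2 ^ n - k) :=
  if_pos h

theorem expo_succ_of_lt {n k : ℕ} (h : 2 ^ n < k) (h' : k < 2 ^ (n + 1)) : expo (n + 1) k = n := by
  rw [expo, if_neg (by omega), if_pos h']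

theorem expo_top (n : ℕ) : expo n (2 ^ n) = n := by
  rcases n with _ | n
  · rfl
  · have : 2 ^ n < 2 ^ (n + 1) := by rw [pow_succ]; have := Nat.two_pow_pos n; omega
    rw [expo, if_neg (by omega), if_neg (by omega)]

theorem expo_le_add (n : ℕ) : ∀ l k : ℕ, l ≤ k → k ≤ 2 ^ n → expo n k ≤ expo n l + (k - l) := by
  induction n with
  | zero => intro l k _ _; exact Nat.zero_le _
  | succ n ih =>
    intro l k hlk hk
    have h1 := ih l k hlk
    have h2 := ih l (2 ^ n)
    rw [expo_top] at h2
    simp only [expo]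
    split_ifs <;> omega

theorem le_expo (n : ℕ) : ∀ l : ℕ, 1 ≤ l → l < 2 ^ n → n ≤ expo n l + 1 := by
  induction n with
  | zero => intro l _ _; omega
  | succ n ih =>
    intro l h1 hl
    have h2 := ih l h1
    have h3 := expo_top n
    rcases lt_trichotomy l (2 ^ n) with h | h | h
    · rw [expo_succ_of_le h.le]; omega
    · subst h
      rw [expo_succ_of_le le_rfl]; omega
    · rw [expo_succ_of_lt h hl]

theorem padicValNat_two_le {n k : ℕ} (h0 : k ≠ 0) (hk : k ≤ 2 ^ n) : padicValNat 2 k ≤ n := by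
  have h := Nat.le_of_dvd (Nat.pos_of_ne_zero h0) (pow_padicValNat_dvd (p := 2) (n := k))
  exact (Nat.pow_le_pow_iff_right (by norm_num)).1 (h.trans hk)

/-- The drop of `E n` over two steps from an even `k` is bounded, with room for the `v₂(k + 2)`
needed to pass from `(k + 2) * s(2^n, k+2)` to `s(2^n, k+2)`. -/
theorem expo_drop (n : ℕ) : ∀ k : ℕ, Even k → 1 ≤ k → k + 2 ≤ 2 ^ n →
    expo n k + padicValNat 2 (k + 2) + 1 ≤ expo n (k + 2) + 2 * n := by
  induction n with
  | zero => intro k _ _ h; simp at h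
  | succ n ih =>
    intro k he h1 hk
    have hv := padicValNat_two_le (by omega) hk
    by_cases h : k + 2 ≤ 2 ^ n
    · have := ih k he h1 h
      rw [expo_succ_of_le h, expo_succ_of_le (by omega)]
      omega
    · have hk2 : 2 ^ n ≤ k := by
        rcases n with _ | n
        · simpa using h1
        · obtain ⟨r, rfl⟩ := he
          rw [pow_succ] at *
          omega
      have e1 : expo (n + 1) k = n := by
        rcases hk2.eq_or_lt with rfl | h
        · rw [expo_succ_of_le le_rfl, expo_top]; omega
        · exact expo_succ_of_lt h (by omega)
      have e2 : n ≤ expo (n + 1) (k + 2) := by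
        rw [expo, if_neg h]; split_ifs <;> omega
      omega

/-- Since `0 < l < 2^n`, the factor `l` contributes at most `n - 1` to the 2-adic valuation. -/
theorem two_pow_dvd_of_dvd_mul {n l e : ℕ} {a : ℤ} (h0 : 0 < l) (hl : l < 2 ^ n)
    (h : (2 : ℤ) ^ e ∣ l * a) : (2 : ℤ) ^ e ∣ 2 ^ (n - 1) * a := by
  obtain ⟨v, m, hm, rfl⟩ := Nat.exists_eq_two_pow_mul_odd h0.ne'
  have hv : v < n := by
    refine (Nat.pow_lt_pow_iff_right (a := 2) (by norm_num)).1 (lt_of_le_of_lt ?_ hl)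
    exact Nat.le_mul_of_pos_right _ hm.pos
  have hc : IsCoprime ((2 : ℤ) ^ e) (m : ℤ) := by
    refine IsCoprime.pow_left ?_
    rw [Int.isCoprime_iff_gcd_eq_one]
    exact Nat.coprime_two_left.2 hm
  have h2 : (2 : ℤ) ^ e ∣ 2 ^ v * a := by
    refine hc.dvd_of_dvd_mul_left (h.trans (dvd_of_eq ?_))
    push_cast
    ring
  refine h2.trans (mul_dvd_mul_right (pow_dvd_pow 2 (by omega)) a)

theorem oddPoly_coeff_two_dvd {n i : ℕ} (hn : 1 ≤ n) (h0 : 0 < i) (hi : i < 2 ^ n) :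
    (2 : ℤ) ∣ (oddPoly n).coeff i := by
  have h := two_pow_dvd_of_dvd_mul h0 hi (oddPoly_coeff_dvd n i hn)
  obtain ⟨m, rfl⟩ : ∃ m, n = m + 1 := ⟨n - 1, by omega⟩
  rw [Nat.add_sub_cancel, pow_succ] at h
  exact (mul_dvd_mul_iff_left (by positivity)).1 h

theorem oddPoly_coeff_zero_odd {n : ℕ} : Odd ((oddPoly n).coeff 0) := by
  obtain ⟨S, hS⟩ := oddPoly_mod_two n
  have h := congrArg (fun p => p.coeff 0) (eq_add_of_sub_eq hS)
  have hne : (0 : ℕ) ≠ 2 ^ n := (Nat.two_pow_pos n).ne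
  simp only [coeff_add, coeff_C_mul, coeff_one_zero, coeff_X_pow, if_neg hne, add_zero] at h
  exact ⟨_, h⟩

theorem risingPoly_coeff_zero (n : ℕ) : (risingPoly (2 ^ n)).coeff 0 = 0 := by
  obtain ⟨N, hN⟩ : ∃ N, 2 ^ n = N + 1 := ⟨2 ^ n - 1, by have := Nat.two_pow_pos n; omega⟩
  rw [hN, risingPoly, Finset.prod_range_succ']
  simp

/-- The contribution of the index pair `(l, i)` to `(l + i) * s(2^(n+1), l + i)` when
`risingPoly_double` is expanded by coefficients. -/
noncomputable def convTerm (n l i : ℕ) : ℤ :=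
  2 ^ (2 ^ n - l) * (risingPoly (2 ^ n)).coeff l * (oddPoly n).coeff i * ((l + i : ℕ) : ℤ)

theorem coeff_double (n k : ℕ) : (k : ℤ) * (risingPoly (2 ^ (n + 1))).coeff k
    = ∑ x ∈ HasAntidiagonal.antidiagonal k, convTerm n x.1 x.2 := by
  rw [risingPoly_double, coeff_mul, Finset.mul_sum]
  refine Finset.sum_congr rfl fun x hx => ?_
  rw [coeff_scaleRoots, risingPoly_natDegree, convTerm, HasAntidiagonal.mem_antidiagonal.1 hx]
  ring

theorem convTerm_eq_zero {n l i : ℕ} (h : l = 0 ∨ 2 ^ n < l ∨ 2 ^ n < i) : convTerm n l i = 0 := by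
  rcases h with rfl | h | h
  · simp [convTerm, risingPoly_coeff_zero]
  · rw [convTerm, coeff_eq_zero_of_natDegree_lt (by rwa [risingPoly_natDegree])]; ring
  · rw [convTerm, coeff_eq_zero_of_natDegree_lt (p := oddPoly n) (by rwa [oddPoly_natDegree])]; ring

/-- Splitting the factor `l + i`, the part `l * s(2^n, l)` gains a factor `2` from the even
coefficient of `oddPoly n`, while the part from `i` gains `2^n` and loses only `2^(n-1)`. -/
theorem dvd_convTerm_mid {n l i e : ℕ} (hn : 1 ≤ n) (hl0 : 0 < l) (hl : l < 2 ^ n)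
    (hi0 : 0 < i) (hi : i < 2 ^ n) (h : (2 : ℤ) ^ e ∣ l * (risingPoly (2 ^ n)).coeff l) :
    (2 : ℤ) ^ (2 ^ n - l + e + 1) ∣ convTerm n l i := by
  obtain ⟨x, hx⟩ := two_pow_dvd_of_dvd_mul hl0 hl h
  obtain ⟨y, hy⟩ := h
  obtain ⟨z, hz⟩ := oddPoly_coeff_two_dvd hn hi0 hi
  obtain ⟨w, hw⟩ := oddPoly_coeff_dvd n i hn
  have h2 : (2 : ℤ) ^ n = 2 * 2 ^ (n - 1) := by rw [← pow_succ']; congr 1; omega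
  refine ⟨y * z + x * w, ?_⟩
  rw [convTerm, pow_succ, pow_add]
  rw [h2] at hw
  generalize (risingPoly (2 ^ n)).coeff l = a at *
  generalize (oddPoly n).coeff i = p at *
  generalize (2 : ℤ) ^ (2 ^ n - l) = q
  push_cast
  linear_combination q * p * hy + q * 2 ^ e * y * hz + q * a * hw + q * 2 * w * hx

theorem dvd_convTerm_right {n l e : ℕ} (hn : 1 ≤ n) (hl0 : 0 < l) (hl : l < 2 ^ n)
    (h : (2 : ℤ) ^ e ∣ l * (risingPoly (2 ^ n)).coeff l) :
    (2 : ℤ) ^ (2 ^ n - l + e) ∣ convTerm n l (2 ^ n) := by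
  obtain ⟨x, hx⟩ := two_pow_dvd_of_dvd_mul hl0 hl h
  obtain ⟨y, hy⟩ := h
  have h2 : (2 : ℤ) ^ n = 2 * 2 ^ (n - 1) := by rw [← pow_succ']; congr 1; omega
  have hp : (oddPoly n).coeff (2 ^ n) = 1 := by
    have := (oddPoly_monic n).coeff_natDegree
    rwa [oddPoly_natDegree] at this
  refine ⟨y + 2 * x, ?_⟩
  rw [convTerm, pow_add, hp]
  push_cast
  rw [h2]
  generalize (risingPoly (2 ^ n)).coeff l = a at *
  generalize (2 : ℤ) ^ (2 ^ n - l) = q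
  linear_combination q * hy + q * 2 * hx

theorem convTerm_zero_right (n l : ℕ) : convTerm n l 0
    = 2 ^ (2 ^ n - l) * (oddPoly n).coeff 0 * (l * (risingPoly (2 ^ n)).coeff l) := by
  rw [convTerm, add_zero]; ring

theorem convTerm_top_left (n i : ℕ) : convTerm n (2 ^ n) i
    = 2 ^ n * (oddPoly n).coeff i + i * (oddPoly n).coeff i := by
  have hp : (risingPoly (2 ^ n)).coeff (2 ^ n) = 1 := by
    have := (risingPoly_monic (2 ^ n)).coeff_natDegree
    rwa [risingPoly_natDegree] at this
  rw [convTerm, hp]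
  simp
  ring

/-- Induction on `n` via `coeff_double`. The dominant term is `(l, i) = (k, 0)` when `k ≤ 2^n` and
`(l, i) = (2^n, k - 2^n)` otherwise; for even `k` all the others have strictly larger valuation. -/
theorem expo_spec (n : ℕ) (hn : 1 ≤ n) : ∀ k : ℕ, 1 ≤ k → k ≤ 2 ^ n →
    (2 : ℤ) ^ expo n k ∣ k * (risingPoly (2 ^ n)).coeff k ∧
    (Even k → ∃ u : ℤ, Odd u ∧ k * (risingPoly (2 ^ n)).coeff k = 2 ^ expo n k * u) := by
  induction n, hn using Nat.le_induction with
  | base =>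
    intro k h1 h2
    have h : risingPoly (2 ^ 1) = X ^ 2 + X := by
      rw [risingPoly, pow_one, Finset.prod_range_succ, Finset.prod_range_succ]
      simp
      ring
    rw [h]
    obtain rfl | rfl : k = 1 ∨ k = 2 := by omega
    · simp [expo, coeff_X, coeff_X_pow]
    · simp [expo, coeff_X, coeff_X_pow]
  | succ n hn ih =>
    intro k h1 hk
    have hD : (2 : ℕ) ^ (n + 1) = 2 * 2 ^ n := pow_succ' 2 n
    by_cases hkD : k ≤ 2 ^ n
    · have hmem : (k, 0) ∈ HasAntidiagonal.antidiagonal k := by simp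
      have hrest : (2 : ℤ) ^ (expo (n + 1) k + 1) ∣
          ∑ x ∈ (HasAntidiagonal.antidiagonal k).erase (k, 0), convTerm n x.1 x.2 := by
        refine Finset.dvd_sum fun x hx => ?_
        obtain ⟨l, i⟩ := x
        simp only [Finset.mem_erase, HasAntidiagonal.mem_antidiagonal, ne_eq, Prod.mk.injEq] at hx ⊢
        rcases Nat.eq_zero_or_pos l with h | hl
        · rw [convTerm_eq_zero (Or.inl h)]; exact dvd_zero _
        have hE := expo_le_add n l k (by omega) hkD
        rw [expo_succ_of_le hkD]
        exact (pow_dvd_pow 2 (by omega)).trans (dvd_convTerm_mid hn hl (by omega) (by omega)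
          (by omega) (ih l hl (by omega)).1)
      obtain ⟨r, hr⟩ := hrest
      have hsum := coeff_double n k
      rw [← Finset.add_sum_erase _ _ hmem, hr, convTerm_zero_right] at hsum
      rw [hsum, expo_succ_of_le hkD]
      obtain ⟨⟨y, hy⟩, hev⟩ := ih k h1 hkD
      refine ⟨⟨(oddPoly n).coeff 0 * y + 2 * r, by rw [hy]; ring⟩, fun he => ?_⟩
      obtain ⟨u, hu, hu'⟩ := hev he
      exact ⟨(oddPoly n).coeff 0 * u + 2 * r,
        (oddPoly_coeff_zero_odd.mul hu).add_even (even_two_mul r), by rw [hu']; ring⟩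
    · rw [not_le] at hkD
      rcases hk.eq_or_lt with rfl | hk'
      · rw [expo_top]
        have hp : (risingPoly (2 ^ (n + 1))).coeff (2 ^ (n + 1)) = 1 := by
          have := (risingPoly_monic (2 ^ (n + 1))).coeff_natDegree
          rwa [risingPoly_natDegree] at this
        rw [hp]
        exact ⟨⟨1, by push_cast; ring⟩, fun _ => ⟨1, odd_one, by push_cast; ring⟩⟩
      rw [expo_succ_of_lt hkD hk']
      have hmem : (2 ^ n, k - 2 ^ n) ∈ HasAntidiagonal.antidiagonal k := by
        rw [HasAntidiagonal.mem_antidiagonal]; omega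
      have hrest : ∀ e : ℕ, (e = n ∨ (e = n + 1 ∧ Even k)) → (2 : ℤ) ^ e ∣
          ∑ x ∈ (HasAntidiagonal.antidiagonal k).erase (2 ^ n, k - 2 ^ n), convTerm n x.1 x.2 := by
        intro e he
        refine Finset.dvd_sum fun x hx => ?_
        obtain ⟨l, i⟩ := x
        simp only [Finset.mem_erase, HasAntidiagonal.mem_antidiagonal, ne_eq, Prod.mk.injEq] at hx ⊢
        by_cases hz : l = 0 ∨ 2 ^ n < l ∨ 2 ^ n < i
        · rw [convTerm_eq_zero hz]; exact dvd_zero _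
        have hE := expo_le_add n l (2 ^ n) (by omega) le_rfl
        have hE' := le_expo n l (by omega) (by omega)
        rw [expo_top] at hE
        have hd := (ih l (by omega) (by omega)).1
        by_cases hi : i = 2 ^ n
        · rw [hi]
          refine (pow_dvd_pow 2 ?_).trans (dvd_convTerm_right hn (by omega) (by omega) hd)
          rcases he with rfl | ⟨rfl, he⟩
          · omega
          · -- Parity excludes `l = 2 ^ n - 1`, the one index where the bound `hE` is too weak.
            have h2n : Even (2 ^ n) := (Nat.even_pow.2 ⟨even_two, by omega⟩)
            obtain ⟨r, hr⟩ := he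
            obtain ⟨s, hs⟩ := h2n
            omega
        · exact (pow_dvd_pow 2 (by omega)).trans (dvd_convTerm_mid hn (by omega) (by omega)
            (by omega) (by omega) hd)
      have hsum := coeff_double n k
      rw [← Finset.add_sum_erase _ _ hmem, convTerm_top_left] at hsum
      rw [hsum]
      refine ⟨dvd_add (dvd_add (dvd_mul_right _ _) (oddPoly_coeff_dvd n _ hn))
        (hrest n (Or.inl rfl)), fun he => ?_⟩
      obtain ⟨r, hr⟩ := hrest (n + 1) (Or.inr ⟨rfl, he⟩)
      have h2n : Even (2 ^ n) := (Nat.even_pow.2 ⟨even_two, by omega⟩)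
      obtain ⟨u, hu, hu'⟩ := oddPoly_coeff_even n (k - 2 ^ n) hn (by omega) (by omega)
        ((Nat.even_sub hkD.le).2 (iff_of_true he h2n))
      obtain ⟨z, hz⟩ := oddPoly_coeff_two_dvd (i := k - 2 ^ n) hn (by omega) (by omega)
      refine ⟨u + 2 * (z + r), hu.add_even (even_two_mul _), ?_⟩
      rw [hr, hu', hz]
      ring

/-! ### Valuations of the Stirling numbers -/

theorem sF_succ_succ (N k : ℕ) : sF (N + 1) (k + 1) = sF N k + N * sF N (k + 1) := by
  rw [sF, Finset.prod_range_succ, mul_add, coeff_add, coeff_mul_X, coeff_mul_C, mul_comm]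
  rfl

theorem sF_ne_zero (N : ℕ) : ∀ k : ℕ, 1 ≤ k → k ≤ N → sF N k ≠ 0 := by
  induction N with
  | zero => intro k h1 h2; omega
  | succ N ih =>
    intro k h1 h2
    obtain ⟨k, rfl⟩ : ∃ m, k = m + 1 := ⟨k - 1, by omega⟩
    rw [sF_succ_succ]
    rcases Nat.eq_zero_or_pos k with rfl | hk
    · rcases Nat.eq_zero_or_pos N with rfl | hN
      · simp [sF]
      · have := ih 1 le_rfl hN
        positivity
    · have := ih k hk (by omega)
      positivity

theorem sF_eq_zero {N k : ℕ} (h : N < k) : sF N k = 0 := by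
  have h2 := coeff_risingPoly N k
  rw [coeff_eq_zero_of_natDegree_lt (by rwa [risingPoly_natDegree])] at h2
  exact_mod_cast h2.symm

theorem padicValNat_of_eq {m e : ℕ} {u : ℤ} (hu : Odd u) (h : (m : ℤ) = 2 ^ e * u) :
    padicValNat 2 m = e := by
  have hm : m = 2 ^ e * u.natAbs := by
    have := congrArg Int.natAbs h
    simpa [Int.natAbs_mul, Int.natAbs_pow] using this
  have hodd : Odd u.natAbs := Int.natAbs_odd.2 hu
  rw [hm, padicValNat.mul (by positivity) hodd.pos.ne', padicValNat.prime_pow,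
    padicValNat.eq_zero_of_not_dvd hodd.not_two_dvd_nat, add_zero]

theorem exists_odd_mul {m : ℕ} (h : m ≠ 0) :
    ∃ u : ℤ, Odd u ∧ (m : ℤ) = 2 ^ padicValNat 2 m * u := by
  obtain ⟨v, w, hw, hm⟩ := Nat.exists_eq_two_pow_mul_odd h
  have hm' : (m : ℤ) = 2 ^ v * (w : ℤ) := by rw [hm]; push_cast; ring
  have hw' : Odd (w : ℤ) := by exact_mod_cast hw
  rw [padicValNat_of_eq hw' hm']
  exact ⟨w, hw', hm'⟩

/-- The factor `g` with `x g = x(x+1)⋯(x+2^n-1)` has odd degree and its roots are symmetric about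
`-2^(n-1)`, so `g(-x-2^n) = -g(x)`. Comparing the coefficients of `x^(k-1)` for odd `k` expresses
`2 s(2^n, k)` through the later Stirling numbers `s(2^n, k+1), s(2^n, k+2), …`. -/
theorem reflection {n k : ℕ} (hn : 1 ≤ n) (hk : Odd k) : ∃ c : ℕ → ℤ,
    2 * (sF (2 ^ n) k : ℤ) = 2 ^ n * (k * sF (2 ^ n) (k + 1))
      + ∑ t ∈ Finset.range (2 ^ n), c t * (2 ^ (n * (t + 2)) * sF (2 ^ n) (k + 2 + t)) := by
  obtain ⟨M, hM⟩ : ∃ M, 2 ^ n = M + 1 := ⟨2 ^ n - 1, by have := Nat.two_pow_pos n; omega⟩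
  have hModd : Odd M := by
    have h2n : Even (2 ^ n) := (Nat.even_pow.2 ⟨even_two, by omega⟩)
    rw [hM] at h2n
    exact Nat.not_even_iff_odd.1 fun h => by simp [Nat.even_add_one, h] at h2n
  have hNc : (2 : ℤ) ^ n = M + 1 := by exact_mod_cast hM
  set g : ℤ[X] := ∏ i ∈ Finset.range M, (X + C ((i : ℤ) + 1)) with hg
  have hgX : risingPoly (2 ^ n) = g * X := by
    rw [hM, risingPoly, Finset.prod_range_succ']
    simp [hg]
  have hgc : ∀ j, g.coeff j = sF (2 ^ n) (j + 1) := by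
    intro j
    rw [← coeff_risingPoly, hgX, coeff_mul_X]
  have hgdeg : g.natDegree = M := by
    rw [hg, natDegree_prod_of_monic _ _ fun _ _ => monic_X_add_C _]
    simp only [natDegree_X_add_C, sum_const, card_range, smul_eq_mul, mul_one]
  set h : ℤ[X] := g.comp (C (-1) * X) with hh
  have hhdeg : h.natDegree ≤ M := by
    refine natDegree_comp_le.trans ?_
    rw [hgdeg]
    have : (C (-1 : ℤ) * X).natDegree ≤ 1 := (natDegree_C_mul_le _ _).trans natDegree_X_le
    nlinarith
  have hT : taylor (2 ^ n : ℤ) h = -g := by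
    rw [taylor_apply, hh, comp_assoc, hg, Polynomial.prod_comp]
    have : ∀ i ∈ Finset.range M,
        (X + C ((i : ℤ) + 1)).comp ((C (-1) * X).comp (X + C ((2 : ℤ) ^ n)))
          = (-1) * (X + C (((M - 1 - i : ℕ) : ℤ) + 1)) := by
      intro i hi
      rw [Finset.mem_range] at hi
      have hc : ((M - 1 - i : ℕ) : ℤ) = M - 1 - i := by omega
      rw [hc, hNc]
      simp
      ring
    rw [Finset.prod_congr rfl this, Finset.prod_mul_distrib, Finset.prod_const, card_range,
      hModd.neg_one_pow, Finset.prod_range_reflect (fun i => X + C ((i : ℤ) + 1)) M]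
    ring
  -- `h(x) = g(-x)`, and `hT` reads `h(x + 2^n) = -g(x)`; coefficient `j = k - 1` is now compared,
  -- the first two terms of the Taylor sum being split off.
  obtain ⟨j, rfl⟩ : ∃ j, k = j + 1 := ⟨k - 1, by have := hk.pos; omega⟩
  have hj : Even j := by
    refine Nat.not_odd_iff_even.1 fun h => ?_
    simp [Nat.odd_add_one, h] at hk
  have hco := congrArg (fun p => p.coeff j) hT
  simp only [coeff_neg] at hco
  rw [taylor_coeff, eval_eq_sum_range' (n := 2 ^ n + 2) (lt_of_le_of_lt
    ((natDegree_hasseDeriv_le h j).trans (Nat.sub_le _ _)) (by omega)),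
    Finset.sum_range_succ', Finset.sum_range_succ'] at hco
  simp only [hasseDeriv_coeff, hh, comp_C_mul_X_coeff, hgc] at hco
  refine ⟨fun t => -(((t + 1 + 1 + j).choose j : ℕ) : ℤ) * (-1) ^ (t + 1 + 1 + j), ?_⟩
  have h1 : (0 + 1 + j).choose j = j + 1 := by
    rw [show 0 + 1 + j = j + 1 by ring]; exact Nat.choose_succ_self_right j
  have h3 : (-1 : ℤ) ^ (0 + 1 + j) = -1 := by
    rw [show 0 + 1 + j = j + 1 by ring]; exact (hj.add_one).neg_one_pow
  rw [h1, h3] at hco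
  simp only [zero_add] at hco
  rw [Nat.choose_self, hj.neg_one_pow, pow_zero, pow_one,
    show 1 + j + 1 = j + 1 + 1 by ring] at hco
  have hs : ∑ t ∈ Finset.range (2 ^ n),
      -(((t + 1 + 1 + j).choose j : ℕ) : ℤ) * (-1) ^ (t + 1 + 1 + j)
        * (2 ^ (n * (t + 2)) * (sF (2 ^ n) (j + 1 + 2 + t) : ℤ))
      = -∑ t ∈ Finset.range (2 ^ n), (((t + 1 + 1 + j).choose j : ℕ) : ℤ)
        * ((sF (2 ^ n) (t + 1 + 1 + j + 1) : ℤ) * (-1) ^ (t + 1 + 1 + j))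
        * (2 ^ n) ^ (t + 1 + 1) := by
    rw [← Finset.sum_neg_distrib]
    refine Finset.sum_congr rfl fun t _ => ?_
    rw [show j + 1 + 2 + t = t + 1 + 1 + j + 1 by ring, pow_mul]
    ring
  rw [hs]
  push_cast at hco ⊢
  linear_combination hco

/-- For odd `k`, the inequality `v₂(s(2^n, l)) < n + v₂(s(2^n, l+1))` for all `l > k` makes the first
term of `reflection` dominate the others, which determines `v₂(s(2^n, k))`. -/
theorem padicVal_odd {n k : ℕ} (hn : 1 ≤ n) (hk : Odd k) (hkN : k < 2 ^ n)
    (H : ∀ l, k < l → l < 2 ^ n →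
      padicValNat 2 (sF (2 ^ n) l) < n + padicValNat 2 (sF (2 ^ n) (l + 1))) :
    padicValNat 2 (sF (2 ^ n) k) + 1 = n + padicValNat 2 (sF (2 ^ n) (k + 1)) := by
  have hchain : ∀ t, k + 1 + t ≤ 2 ^ n → padicValNat 2 (sF (2 ^ n) (k + 1)) + t
      ≤ n * t + padicValNat 2 (sF (2 ^ n) (k + 1 + t)) := by
    intro t
    induction t with
    | zero => intro _; simp
    | succ t ih =>
      intro ht
      have h1 := ih (by omega)
      have h2 := H (k + 1 + t) (by omega) (by omega)
      rw [mul_add, mul_one, ← add_assoc (k + 1) t 1]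
      omega
  set e := padicValNat 2 (sF (2 ^ n) (k + 1)) with he
  obtain ⟨c, hc⟩ := reflection hn hk
  obtain ⟨u, hu, hu'⟩ := exists_odd_mul (sF_ne_zero (2 ^ n) (k + 1) (by omega) (by omega))
  have hd : (2 : ℤ) ^ (n + e + 1) ∣
      ∑ t ∈ Finset.range (2 ^ n), c t * (2 ^ (n * (t + 2)) * sF (2 ^ n) (k + 2 + t)) := by
    refine Finset.dvd_sum fun t _ => Dvd.dvd.mul_left ?_ _
    by_cases ht : k + 2 + t ≤ 2 ^ n
    · have h1 := hchain (t + 1) (by omega)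
      rw [show k + 1 + (t + 1) = k + 2 + t by ring] at h1
      obtain ⟨w, -, hw⟩ := exists_odd_mul (sF_ne_zero (2 ^ n) (k + 2 + t) (by omega) ht)
      rw [hw, ← mul_assoc, ← pow_add]
      refine Dvd.dvd.mul_right (pow_dvd_pow 2 ?_) _
      have : n * (t + 2) = n * (t + 1) + n := by ring
      omega
    · rw [sF_eq_zero (not_le.1 ht)]
      simp
  obtain ⟨r, hr⟩ := hd
  rw [hr, hu', ← he] at hc
  have hko : Odd (k : ℤ) := by exact_mod_cast hk
  have h2 : padicValNat 2 (2 * sF (2 ^ n) k) = n + e := by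
    refine padicValNat_of_eq (u := k * u + 2 * r) ((hko.mul hu).add_even (even_two_mul r)) ?_
    push_cast
    rw [hc]
    ring
  rw [padicValNat.mul two_ne_zero (sF_ne_zero _ k hk.pos hkN.le), padicValNat_self] at h2
  omega

theorem padicVal_even {n k : ℕ} (hn : 1 ≤ n) (hk : Even k) (h1 : 1 ≤ k) (hkN : k ≤ 2 ^ n) :
    padicValNat 2 k + padicValNat 2 (sF (2 ^ n) k) = expo n k := by
  obtain ⟨u, hu, h⟩ := (expo_spec n hn k h1 hkN).2 hk
  rw [← padicValNat.mul (by omega) (sF_ne_zero _ k h1 hkN)]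
  refine padicValNat_of_eq hu ?_
  rw [← h, coeff_risingPoly]
  push_cast
  rfl

/-- Downward induction on `k`, with `d = 2^n - k`. An odd `k` is settled by `padicVal_odd`. For even
`k`, `padicVal_odd` at `k + 1` reduces the claim to comparing `s(2^n, k)` with `s(2^n, k+2)`, whose
valuations are given by `expo`. -/
theorem padicVal_lt {n : ℕ} (hn : 1 ≤ n) (d : ℕ) : ∀ k, 1 ≤ k → k < 2 ^ n → k + d = 2 ^ n →
    padicValNat 2 (sF (2 ^ n) k) < n + padicValNat 2 (sF (2 ^ n) (k + 1)) := by
  induction d using Nat.strong_induction_on with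
  | _ d ih =>
    intro k h1 hk hd
    have H : ∀ l, k < l → l < 2 ^ n →
        padicValNat 2 (sF (2 ^ n) l) < n + padicValNat 2 (sF (2 ^ n) (l + 1)) := fun l hl hl' =>
      ih (2 ^ n - l) (by omega) l (by omega) hl' (by omega)
    rcases Nat.even_or_odd k with he | ho
    · have h2n : Even (2 ^ n) := (Nat.even_pow.2 ⟨even_two, by omega⟩)
      have hk2 : k + 2 ≤ 2 ^ n := by
        obtain ⟨r, hr⟩ := he
        obtain ⟨s, hs⟩ := h2n
        omega
      have e1 := padicVal_odd hn he.add_one (by omega) fun l hl => H l (by omega)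
      rw [show k + 1 + 1 = k + 2 from rfl] at e1
      have e2 := padicVal_even hn he h1 hk.le
      have e3 := padicVal_even hn (k := k + 2) (he.add even_two) (by omega) hk2
      have e4 := expo_drop n k he h1 hk2
      have e5 : 1 ≤ padicValNat 2 k := one_le_padicValNat_of_dvd (by omega) he.two_dvd
      omega
    · have := padicVal_odd hn ho hk H
      omega

theorem stmt1 (n k : ℕ) (hn : 1 ≤ n) (hk : 1 ≤ k) (hk' : k ≤ 2 ^ n) :
    padicValNat 2 (sF (2 ^ n + 1) (k + 1)) = padicValNat 2 (sF (2 ^ n) k) := by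
  rw [sF_succ_succ]
  rcases hk'.eq_or_lt with rfl | hlt
  · rw [sF_eq_zero (Nat.lt_succ_self _), mul_zero, add_zero]
  · have hv := padicVal_lt hn (2 ^ n - k) k hk hlt (by omega)
    obtain ⟨u, hu, hu'⟩ := exists_odd_mul (sF_ne_zero _ k hk hk')
    obtain ⟨w, -, hw⟩ := exists_odd_mul (sF_ne_zero (2 ^ n) (k + 1) (by omega) hlt)
    obtain ⟨r, hr⟩ := Nat.exists_eq_add_of_lt hv
    refine padicValNat_of_eq (u := u + 2 * (2 ^ r * w)) (hu.add_even (even_two_mul _)) ?_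
    push_cast
    rw [hw, ← mul_assoc, ← pow_add, hr, pow_succ, pow_add]
    nth_rewrite 1 [hu']
    ring
end

section
/- For all positive integers n and k with k ≤ 2^n, v₂(s(2^n, k)) ≤ v₂(s(2^n, 1)), where s denotes the unsigned Stirling number of the first kind. -/
/-!
Put `N = 2 ^ n` and `w = x (x + N)`. Pairing `x + i` with `x + N - i` gives
`x (x + 1) ⋯ (x + N - 1) = x (x + N / 2) P(w)` with `P(w) = ∏ (w + i (N - i))` over `1 ≤ i < N / 2`
(`stirling_factor`), so everything rests on the exact valuations of the coefficients of `P`.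

Separating odd and even `i` writes `P` for `N` as a product `Q · S`, where `S` is the polynomial `P`
for `N / 2` with its roots multiplied by `4` (`coreP_succ`, `evenS_coeff`), and where the odd part
satisfies `Q ≡ (w + 1) ^ (N / 4)` modulo `N / 2` (`oddQ_dvd`). The coefficients of `Q` therefore
have the valuations of binomial coefficients of a power of two. In each coefficient of `Q · S` one
term has strictly smallest valuation, which gives the exact valuation `V (n - 1) j` of the
coefficient of `w ^ j` in `P` by recursion on `n` (`coreP_coeff`).

As `w ≡ x ^ 2` modulo `N` and `V` does not fall too fast (`V_fall`), the valuation of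
`s(N, 2 j + 2)` is `V (n - 1) j`, and that of `s(N, 2 j + 1)` is `n - 1 + V (n - 1) j`
(`sF_even`, `sF_odd`). Finally `V (n - 1) j ≤ N - 2 n = V (n - 1) 0` (`V_le`, `V_zero`), so
`k = 1` maximises the valuation.
-/

open Polynomial Finset

/-! ### Integers of known 2-adic valuation -/

/-- `Exact2 e a` says that the 2-adic valuation of the (nonzero) integer `a` is exactly `e`. -/
def Exact2 (e : ℕ) (a : ℤ) : Prop := ∃ u : ℤ, Odd u ∧ a = 2 ^ e * u

namespace Exact2

lemma dvd {e f : ℕ} {a : ℤ} (h : Exact2 e a) (hf : f ≤ e) : (2 : ℤ) ^ f ∣ a := by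
  obtain ⟨u, -, rfl⟩ := h
  exact (pow_dvd_pow 2 hf).mul_right u

lemma mul {e f : ℕ} {a b : ℤ} (ha : Exact2 e a) (hb : Exact2 f b) : Exact2 (e + f) (a * b) := by
  obtain ⟨u, hu, rfl⟩ := ha
  obtain ⟨w, hw, rfl⟩ := hb
  exact ⟨u * w, hu.mul hw, by ring⟩

lemma add_dvd {e : ℕ} {a b : ℤ} (ha : Exact2 e a) (hb : (2 : ℤ) ^ (e + 1) ∣ b) :
    Exact2 e (a + b) := by
  obtain ⟨u, hu, rfl⟩ := ha
  obtain ⟨w, rfl⟩ := hb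
  exact ⟨u + 2 * w, hu.add_even (even_two_mul w), by ring⟩

lemma two_pow (e : ℕ) : Exact2 e (2 ^ e) := ⟨1, odd_one, by ring⟩

/-- If one term of a sum has strictly smaller valuation than all the others, it determines the
valuation of the sum. -/
lemma sum {ι : Type*} [DecidableEq ι] {s : Finset ι} {f : ι → ℤ} {e : ℕ} {i₀ : ι} (hi : i₀ ∈ s)
    (h₀ : Exact2 e (f i₀)) (h : ∀ i ∈ s, i ≠ i₀ → (2 : ℤ) ^ (e + 1) ∣ f i) :
    Exact2 e (∑ i ∈ s, f i) := by
  rw [← Finset.add_sum_erase s f hi]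
  refine h₀.add_dvd (Finset.dvd_sum fun i hi' => ?_)
  exact h i (Finset.mem_of_mem_erase hi') (Finset.ne_of_mem_erase hi')

lemma natCast {a : ℕ} (ha : a ≠ 0) : Exact2 (padicValNat 2 a) (a : ℤ) := by
  obtain ⟨w, hw⟩ := pow_padicValNat_dvd (p := 2) (n := a)
  refine ⟨w, ?_, by exact_mod_cast hw⟩
  rw [Int.odd_coe_nat, ← Nat.not_even_iff_odd, even_iff_two_dvd]
  intro h2
  refine pow_succ_padicValNat_not_dvd (p := 2) ha ?_
  rw [pow_succ]
  conv_rhs => rw [hw]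
  exact mul_dvd_mul_left _ h2

lemma padicValNat_eq {e a : ℕ} (h : Exact2 e (a : ℤ)) : padicValNat 2 a = e := by
  obtain ⟨u, hu, hau⟩ := h
  have ha : a ≠ 0 := by
    rintro rfl
    have : u = 0 := by simpa using hau
    simp [this] at hu
  apply le_antisymm
  · by_contra! hlt
    have h1 : (2 : ℤ) ^ (e + 1) ∣ a := (natCast ha).dvd hlt
    rw [hau, pow_succ] at h1
    have h2 := (mul_dvd_mul_iff_left (by positivity : (2 : ℤ) ^ e ≠ 0)).1 h1
    exact (Int.not_even_iff_odd.2 hu) (even_iff_two_dvd.2 h2)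
  · have : (2 ^ e : ℕ) ∣ a := by
      have : (2 : ℤ) ^ e ∣ a := ⟨u, hau⟩
      exact_mod_cast this
    exact (padicValNat_dvd_iff_le ha).1 this

end Exact2

/-! ### The valuation function of the core polynomial -/

/-- The 2-adic valuation of the binomial coefficient `(2 ^ m).choose i`. -/
def beta (m i : ℕ) : ℕ := padicValNat 2 ((2 ^ m).choose i)

lemma beta_zero (m : ℕ) : beta m 0 = 0 := by simp [beta]

lemma beta_add (m i : ℕ) (h1 : 1 ≤ i) (h2 : i ≤ 2 ^ m) : beta m i + padicValNat 2 i = m := by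
  have h := Nat.factorization_choose_prime_pow_add_factorization Nat.prime_two h2 (by omega)
  rwa [Nat.factorization_def _ Nat.prime_two, Nat.factorization_def _ Nat.prime_two] at h

lemma beta_le (m i : ℕ) (h2 : i ≤ 2 ^ m) : beta m i ≤ m := by
  rcases Nat.eq_zero_or_pos i with rfl | h
  · simp [beta_zero]
  · have := beta_add m i h h2
    omega

lemma beta_symm (m i : ℕ) (h : i ≤ 2 ^ m) : beta m (2 ^ m - i) = beta m i := by
  simp [beta, Nat.choose_symm h]

lemma padicValNat_lt (i : ℕ) (h : 1 ≤ i) : padicValNat 2 i < i :=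
  (padicValNat_le_nat_log i).trans_lt (Nat.log_lt_self 2 (by omega))

/-- The 2-adic valuation of the coefficient of `w ^ j` in `coreP m` (meaningful for
`j ≤ 2 ^ m - 1`, the degree of `coreP m`; see `coreP_coeff`). -/
def V : ℕ → ℕ → ℕ
  | 0, _ => 0
  | m + 1, j => if j ≤ 2 ^ m - 1 then V m j + 2 * (2 ^ m - 1 - j) else beta m (j - (2 ^ m - 1))

lemma V_low {m j : ℕ} (h : j ≤ 2 ^ m - 1) : V (m + 1) j = V m j + 2 * (2 ^ m - 1 - j) := by
  simp [V, h]

lemma V_high {m j : ℕ} (h : 2 ^ m - 1 < j) : V (m + 1) j = beta m (j - (2 ^ m - 1)) := by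
  simp [V, h]

lemma V_high_le {m j : ℕ} (h : 2 ^ m - 1 < j) (hj : j ≤ 2 ^ (m + 1) - 1) : V (m + 1) j ≤ m := by
  rw [V_high h]
  apply beta_le
  have := Nat.pow_succ 2 m
  omega

lemma V_top (m : ℕ) : V m (2 ^ m - 1) = 0 := by
  cases m with
  | zero => rfl
  | succ m =>
    have h1 := Nat.pow_succ 2 m
    have h2 := Nat.one_le_two_pow (n := m)
    rw [V_high (by omega)]
    have : 2 ^ (m + 1) - 1 - (2 ^ m - 1) = 2 ^ m - 0 := by omega
    rw [this, beta_symm _ _ (by omega), beta_zero]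

/-- `V` cannot increase much with `j`. With `beta_add`, this makes the constant term of `oddQ m`
dominate in the coefficients of `w ^ j` in `oddQ m * evenS m` for `j ≤ 2 ^ m - 1`. -/
lemma V_rise (m i j : ℕ) (hi : 1 ≤ i) (hij : i ≤ j) (hj : j ≤ 2 ^ m - 1) :
    V m j + padicValNat 2 i < V m (j - i) + 2 * i + m := by
  induction m with
  | zero => simp at hj; omega
  | succ m ih =>
    have hv := padicValNat_lt i hi
    rcases le_or_gt j (2 ^ m - 1) with h | h
    · rw [V_low h, V_low (by omega)]
      have := ih h
      omega
    · have := V_high_le h hj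
      omega

/-- This makes the leading term of `evenS m` dominate in the coefficients of `w ^ j` in
`oddQ m * evenS m` for `j > 2 ^ m - 1`. -/
lemma V_near_top (m t : ℕ) (ht : 1 ≤ t) (ht' : t ≤ 2 ^ m - 1) :
    m < 2 * t + V m (2 ^ m - 1 - t) := by
  cases m with
  | zero => simp at ht'; omega
  | succ m =>
    have h1 := Nat.pow_succ 2 m
    have hv := padicValNat_lt t ht
    rcases lt_or_ge t (2 ^ m) with h | h
    · rw [V_high (by omega)]
      have : 2 ^ (m + 1) - 1 - t - (2 ^ m - 1) = 2 ^ m - t := by omega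
      rw [this, beta_symm _ _ h.le]
      have := beta_add m t ht h.le
      omega
    · have : m + 1 < 2 ^ (m + 1) := Nat.lt_two_pow_self
      omega

/-- `V m` drops by at most `2 * m` per step. Since each step trades `w = x * (x + N)`,
`N = 2 ^ (m + 1)`, for two further powers of `N`, the substitution of `w` does not disturb the
valuations. -/
lemma V_fall (m j t : ℕ) (h : j + t ≤ 2 ^ m - 1) : V m j ≤ V m (j + t) + 2 * t * m := by
  induction m generalizing j t with
  | zero => simp [V]
  | succ m ih =>
    rcases le_or_gt (j + t) (2 ^ m - 1) with h1 | h1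
    · rw [V_low h1, V_low (by omega)]
      have := ih j t h1
      have e : 2 * t * (m + 1) = 2 * t * m + 2 * t := by ring
      omega
    · rcases le_or_gt j (2 ^ m - 1) with h2 | h2
      · rw [V_low h2]
        have := ih j (2 ^ m - 1 - j) (by omega)
        rw [Nat.add_sub_cancel' h2, V_top] at this
        have h3 : 2 * (2 ^ m - 1 - j) * (m + 1) ≤ 2 * t * (m + 1) := by gcongr; omega
        have e : 2 * (2 ^ m - 1 - j) * (m + 1)
          = 2 * (2 ^ m - 1 - j) * m + 2 * (2 ^ m - 1 - j) := by ring
        omega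
      · rcases Nat.eq_zero_or_pos t with rfl | ht
        · simp
        · have := V_high_le h2 (by omega)
          have : 1 * (m + 1) ≤ 2 * t * (m + 1) := by gcongr; omega
          omega

lemma V_le (m j : ℕ) (h : j ≤ 2 ^ m - 1) : V m j + 2 * (m + 1) ≤ 2 ^ (m + 1) := by
  induction m with
  | zero => simp [V]
  | succ m ih =>
    have e1 := Nat.pow_succ 2 m
    have e2 := Nat.pow_succ 2 (m + 1)
    rcases le_or_gt j (2 ^ m - 1) with h1 | h1
    · have := ih h1
      have := Nat.one_le_two_pow (n := m)
      rw [V_low h1]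
      omega
    · have := V_high_le h1 h
      have : m + 1 ≤ 2 ^ m := Nat.lt_two_pow_self
      omega

lemma V_zero (m : ℕ) : V m 0 + 2 * (m + 1) = 2 ^ (m + 1) := by
  induction m with
  | zero => simp [V]
  | succ m ih =>
    have e1 := Nat.pow_succ 2 m
    have e2 := Nat.pow_succ 2 (m + 1)
    have := Nat.one_le_two_pow (n := m)
    rw [V_low (Nat.zero_le _)]
    omega

/-! ### The core polynomial and its odd and even parts -/

/-- With `N = 2 ^ (m + 1)`, the polynomial `∏ (w + i (N - i))` over `1 ≤ i < N / 2`. -/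
noncomputable def coreP (m : ℕ) : ℤ[X] :=
  ∏ i ∈ range (2 ^ m - 1), (X + C (((i : ℤ) + 1) * (2 ^ (m + 1) - (i + 1))))

/-- With `N = 2 ^ (m + 2)`, the polynomial `∏ (w + i (N - i))` over the odd `i < N / 2`. -/
noncomputable def oddQ (m : ℕ) : ℤ[X] :=
  ∏ i ∈ range (2 ^ m), (X + C ((2 * (i : ℤ) + 1) * (2 ^ (m + 2) - (2 * i + 1))))

/-- With `N = 2 ^ (m + 2)`, the polynomial `∏ (w + i (N - i))` over the even `i` with
`1 ≤ i < N / 2`; its constants are `4` times those of `coreP m`. -/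
noncomputable def evenS (m : ℕ) : ℤ[X] :=
  ∏ i ∈ range (2 ^ m - 1), (X + C (4 * (((i : ℤ) + 1) * (2 ^ (m + 1) - (i + 1)))))

lemma prod_range_odd_even {M : Type*} [CommMonoid M] (g : ℕ → M) (d : ℕ) :
    ∏ i ∈ range (2 * d + 1), g i
      = (∏ i ∈ range (d + 1), g (2 * i)) * ∏ i ∈ range d, g (2 * i + 1) := by
  induction d with
  | zero => simp
  | succ d ih =>
    rw [show 2 * (d + 1) + 1 = (2 * d + 1) + 1 + 1 by ring, prod_range_succ, prod_range_succ, ih,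
      prod_range_succ (fun i => g (2 * i)) (d + 1), prod_range_succ (fun i => g (2 * i + 1)) d]
    rw [show 2 * d + 1 + 1 = 2 * (d + 1) by ring]
    ac_rfl

lemma coreP_succ (m : ℕ) : coreP (m + 1) = oddQ m * evenS m := by
  obtain ⟨d, hd⟩ : ∃ d, 2 ^ m = d + 1 := ⟨2 ^ m - 1, by have := Nat.one_le_two_pow (n := m); omega⟩
  rw [coreP, oddQ, evenS, show 2 ^ (m + 1) - 1 = 2 * d + 1 by rw [pow_succ]; omega,
    prod_range_odd_even, hd]
  refine congrArg₂ (· * ·) ?_ ?_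
  · refine prod_congr rfl fun i _ => ?_
    push_cast
    ring_nf
  · refine prod_congr rfl fun i _ => ?_
    congr 2
    push_cast
    ring

lemma natDegree_prod_X_add_C (s : Finset ℕ) (c : ℕ → ℤ) :
    (∏ i ∈ s, (X + C (c i))).natDegree = s.card := by
  rw [natDegree_prod_of_monic _ _ fun i _ => monic_X_add_C (c i)]
  simp only [natDegree_X_add_C, sum_const, smul_eq_mul, mul_one]

lemma coreP_natDegree (m : ℕ) : (coreP m).natDegree = 2 ^ m - 1 := by
  rw [coreP, natDegree_prod_X_add_C, card_range]

/-- `evenS m` is `coreP m` rescaled by `4`. -/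
lemma evenS_coeff (m j : ℕ) (hj : j ≤ 2 ^ m - 1) :
    (evenS m).coeff j = 4 ^ (2 ^ m - 1 - j) * (coreP m).coeff j := by
  have h : (evenS m).comp (C 4 * X) = C (4 ^ (2 ^ m - 1)) * coreP m := by
    rw [evenS, coreP, Polynomial.prod_comp, C_pow]
    conv_rhs => rw [← card_range (2 ^ m - 1), ← prod_const, card_range, ← prod_mul_distrib]
    refine prod_congr rfl fun i _ => ?_
    simp only [add_comp, X_comp, C_comp]
    simp only [C_mul]
    ring
  have h2 := congrArg (fun p => coeff p j) h
  simp only [comp_C_mul_X_coeff, coeff_C_mul] at h2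
  have h4 : (4 : ℤ) ^ (2 ^ m - 1) = 4 ^ (2 ^ m - 1 - j) * 4 ^ j := by
    rw [← pow_add]; congr 1; omega
  rw [h4] at h2
  have : (4 : ℤ) ^ j ≠ 0 := by positivity
  apply mul_right_cancel₀ this
  linarith

lemma evenS_coeff_eq_zero (m j : ℕ) (hj : 2 ^ m - 1 < j) : (evenS m).coeff j = 0 := by
  apply coeff_eq_zero_of_natDegree_lt
  rwa [evenS, natDegree_prod_X_add_C, card_range]

lemma dvd_prod_sub_prod (M : ℤ[X]) (f g : ℕ → ℤ[X]) (n : ℕ)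
    (h : ∀ i ∈ range n, M ∣ f i - g i) :
    M ∣ ∏ i ∈ range n, f i - ∏ i ∈ range n, g i := by
  induction n with
  | zero => simp
  | succ n ih =>
    rw [prod_range_succ, prod_range_succ]
    have h1 := ih fun i hi => h i (mem_range.2 ((mem_range.1 hi).trans n.lt_succ_self))
    have h2 := h n (self_mem_range_succ n)
    have e : (∏ i ∈ range n, f i) * f n - (∏ i ∈ range n, g i) * g n
        = (∏ i ∈ range n, f i - ∏ i ∈ range n, g i) * f n
          + (∏ i ∈ range n, g i) * (f n - g n) := by ring
    rw [e]
    exact dvd_add (h1.mul_right _) (h2.mul_left _)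

lemma prod_range_two_mul {M : Type*} [CommMonoid M] (g : ℕ → M) (K : ℕ) :
    ∏ i ∈ range (2 * K), g i = ∏ i ∈ range K, (g i * g (2 * K - 1 - i)) := by
  rw [two_mul, prod_range_add, prod_mul_distrib]
  congr 1
  rw [← prod_range_reflect]
  refine prod_congr rfl fun i hi => ?_
  have := mem_range.1 hi
  congr 1
  omega

/-- The indices `i` and `N - i`, with `N = 2 ^ (m + 2)`, contribute to `oddQ (m + 1)` two factors
whose product is the square of a factor of `oddQ m` modulo `N`. -/
lemma oddQ_dvd_sq (m : ℕ) : C (2 ^ (m + 2)) ∣ oddQ (m + 1) - oddQ m ^ 2 := by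
  rw [oddQ, oddQ, pow_succ 2 m, mul_comm (2 ^ m) 2, prod_range_two_mul, ← prod_pow]
  refine dvd_prod_sub_prod _ _ _ _ fun i hi => ?_
  have hi := mem_range.1 hi
  have hc : ((2 * 2 ^ m - 1 - i : ℕ) : ℤ) = 2 * 2 ^ m - 1 - i := by
    have : i + 1 + (2 * 2 ^ m - 1 - i) = 2 * 2 ^ m := by omega
    have : (i : ℤ) + 1 + ((2 * 2 ^ m - 1 - i : ℕ) : ℤ) = 2 * 2 ^ m := by exact_mod_cast this
    linarith
  rw [hc]
  -- With `N = 2 ^ (m + 2)`, `a = 2 * i + 1` and `c = a * (N - a)`, the paired constants are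
  -- `c + a * N` and `c + N ^ 2 - a * N`.
  refine ⟨C (2 ^ (m + 2)) * (X + C ((2 * (i : ℤ) + 1) * (2 ^ (m + 2) - (2 * i + 1))))
    + C ((2 * (i : ℤ) + 1) * ((2 ^ (m + 2)) ^ 2 - (2 * i + 1) * 2 ^ (m + 2))), ?_⟩
  have h2 : (C 2 : ℤ[X]) = 2 := rfl
  simp only [map_mul, map_add, map_sub, map_pow, map_one, h2]
  ring

lemma oddQ_dvd (m : ℕ) : C (2 ^ (m + 1)) ∣ oddQ m - (X + 1) ^ 2 ^ m := by
  induction m with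
  | zero =>
    refine ⟨1, ?_⟩
    simp only [oddQ, pow_zero, range_one, prod_singleton]
    norm_num
  | succ m ih =>
    obtain ⟨D, hD⟩ := ih
    obtain ⟨E, hE⟩ := oddQ_dvd_sq m
    refine ⟨E + D * (C (2 ^ m) * D + (X + 1) ^ 2 ^ m), ?_⟩
    have h1 : oddQ m = (X + 1) ^ 2 ^ m + C (2 ^ (m + 1)) * D := by rw [← hD]; ring
    have h2 : oddQ (m + 1) = oddQ m ^ 2 + C (2 ^ (m + 2)) * E := by rw [← hE]; ring
    rw [h2, h1]
    have h3 : (C 2 : ℤ[X]) = 2 := rfl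
    simp only [map_pow, h3]
    ring

/-- `oddQ m` and `(w + 1) ^ (2 ^ m)` agree modulo `2 ^ (m + 1)`, while the binomial coefficients
of `2 ^ m` have valuation at most `m`. -/
lemma oddQ_coeff (m i : ℕ) (hi : i ≤ 2 ^ m) : Exact2 (beta m i) ((oddQ m).coeff i) := by
  obtain ⟨D, hD⟩ := oddQ_dvd m
  have h1 : oddQ m = (X + 1) ^ 2 ^ m + C (2 ^ (m + 1)) * D := by rw [← hD]; ring
  rw [h1, coeff_add, coeff_X_add_one_pow, coeff_C_mul]
  refine Exact2.add_dvd (Exact2.natCast (Nat.choose_pos hi).ne') ?_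
  exact (pow_dvd_pow 2 (by have := beta_le m i hi; omega)).mul_right _

/-- The coefficients of `oddQ m * evenS m` are sums with a single dominant term. For
`j ≤ 2 ^ m - 1` it is the constant term of `oddQ m` times the coefficient of `w ^ j` in
`evenS m`; for larger `j` it involves the leading coefficient of `evenS m`. -/
lemma coreP_coeff (m j : ℕ) (hj : j ≤ 2 ^ m - 1) : Exact2 (V m j) ((coreP m).coeff j) := by
  induction m generalizing j with
  | zero =>
    obtain rfl : j = 0 := by simpa using hj
    simpa [coreP, V] using Exact2.two_pow 0
  | succ m ih =>
    have hpow := Nat.pow_succ 2 m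
    have hS : ∀ y ≤ 2 ^ m - 1, Exact2 (2 * (2 ^ m - 1 - y) + V m y) ((evenS m).coeff y) := by
      intro y hy
      rw [evenS_coeff m y hy]
      refine Exact2.mul ?_ (ih y hy)
      rw [show (4 : ℤ) = 2 ^ 2 by norm_num, ← pow_mul]
      exact Exact2.two_pow _
    rw [coreP_succ, coeff_mul]
    rcases le_or_gt j (2 ^ m - 1) with h | h
    · refine Exact2.sum (i₀ := (0, j)) (by simp) ?_ ?_
      · have := (oddQ_coeff m 0 (by positivity)).mul (hS j h)
        rw [beta_zero] at this
        rw [V_low h]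
        convert this using 1
        ring
      · rintro ⟨x, y⟩ hxy hne
        rw [HasAntidiagonal.mem_antidiagonal] at hxy
        dsimp only at hxy ⊢
        have hx : 1 ≤ x := by
          by_contra! hx
          exact hne (by ext <;> simp <;> omega)
        have h1 := (oddQ_coeff m x (by omega)).mul (hS y (by omega))
        apply h1.dvd
        rw [V_low h]
        have h2 := V_rise m x j hx (by omega) h
        have h3 := beta_add m x hx (by omega)
        rw [show j - x = y by omega] at h2
        omega
    · rw [V_high h]
      refine Exact2.sum (i₀ := (j - (2 ^ m - 1), 2 ^ m - 1)) (by simp; omega) ?_ ?_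
      · have := (oddQ_coeff m (j - (2 ^ m - 1)) (by omega)).mul (hS (2 ^ m - 1) le_rfl)
        simpa [V_top] using this
      · rintro ⟨x, y⟩ hxy hne
        rw [HasAntidiagonal.mem_antidiagonal] at hxy
        dsimp only at hxy ⊢
        rcases lt_trichotomy y (2 ^ m - 1) with hy | hy | hy
        · apply Dvd.dvd.mul_left
          apply (hS y hy.le).dvd
          have h1 := V_near_top m (2 ^ m - 1 - y) (by omega) (by omega)
          have h2 := beta_le m (j - (2 ^ m - 1)) (by omega)
          rw [show 2 ^ m - 1 - (2 ^ m - 1 - y) = y by omega] at h1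
          omega
        · exact absurd (by ext <;> simp <;> omega) hne
        · rw [evenS_coeff_eq_zero m y hy, mul_zero]
          exact dvd_zero _

/-! ### From the core polynomial to Stirling numbers -/

/-- With `N = 2 ^ (m + 1)`, the polynomial `coreP m` evaluated at `w = x (x + N)`; it equals the
product of all `x + i` with `1 ≤ i < N` and `i ≠ N / 2`. -/
noncomputable def coreG (m : ℕ) : ℤ[X] := (coreP m).comp (X * (X + C (2 ^ (m + 1))))

lemma coreG_coeff (m r : ℕ) : (coreG m).coeff r = ∑ l ∈ range (2 ^ m),
    if l ≤ r then (coreP m).coeff l * ((2 ^ (m + 1)) ^ (2 * l - r) * (l.choose (r - l) : ℤ))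
      else 0 := by
  rw [coreG, comp_eq_sum_left, sum_over_range' _ (by simp) (2 ^ m)
    (by rw [coreP_natDegree]; have := Nat.one_le_two_pow (n := m); omega), finsetSum_coeff]
  refine sum_congr rfl fun l _ => ?_
  rw [coeff_C_mul, mul_pow, coeff_X_pow_mul', coeff_X_add_C_pow]
  split_ifs with h
  · rw [show l - (r - l) = 2 * l - r by omega]
  · simp

/-- The term of index `l` in `coreG_coeff` has valuation at least
`V m l + (m + 1) * (2 * l - r)`. -/
lemma coreG_term_dvd (m r l e : ℕ) (hl : l < 2 ^ m)
    (h : r ≤ 2 * l → e ≤ V m l + (m + 1) * (2 * l - r)) :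
    (2 : ℤ) ^ e ∣ if l ≤ r then
      (coreP m).coeff l * ((2 ^ (m + 1)) ^ (2 * l - r) * (l.choose (r - l) : ℤ)) else 0 := by
  split_ifs with hlr
  · rcases le_or_gt r (2 * l) with h1 | h1
    · rw [← mul_assoc, ← pow_mul]
      apply Dvd.dvd.mul_right
      exact ((coreP_coeff m l (by omega)).mul (Exact2.two_pow _)).dvd (h h1)
    · rw [Nat.choose_eq_zero_of_lt (by omega)]
      simp
  · exact dvd_zero _

lemma coreG_even (m j : ℕ) (hj : j ≤ 2 ^ m - 1) :
    Exact2 (V m j) ((coreG m).coeff (2 * j)) := by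
  have hpos := Nat.one_le_two_pow (n := m)
  rw [coreG_coeff]
  refine Exact2.sum (i₀ := j) (mem_range.2 (by omega)) ?_ ?_
  · rw [if_pos (by omega), show 2 * j - j = j by omega]
    simpa using coreP_coeff m j hj
  · intro l hl hne
    have hl := mem_range.1 hl
    refine coreG_term_dvd m _ l _ hl fun h => ?_
    have h1 := V_fall m j (l - j) (by omega)
    rw [show j + (l - j) = l by omega] at h1
    have h2 : 2 * l - 2 * j = 2 * (l - j) := by omega
    have h3 : (m + 1) * (2 * (l - j)) = 2 * (l - j) * m + 2 * (l - j) := by ring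
    rw [h2, h3]
    omega

lemma coreG_odd (m j e : ℕ)
    (he : ∀ l, j < l → l ≤ 2 ^ m - 1 → e ≤ V m l + (m + 1) * (2 * l - (2 * j + 1))) :
    (2 : ℤ) ^ e ∣ (coreG m).coeff (2 * j + 1) := by
  rw [coreG_coeff]
  refine Finset.dvd_sum fun l hl => ?_
  have hl := mem_range.1 hl
  exact coreG_term_dvd m _ l _ hl fun h => he l (by omega) (by omega)

/-- The factors `x` and `x + N / 2` of the rising factorial of length `N = 2 ^ (m + 1)` are set
apart; the others are paired as `(x + i) * (x + N - i) = x * (x + N) + i * (N - i)`. -/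
lemma stirling_factor (m : ℕ) :
    (∏ i ∈ range (2 ^ (m + 1)), (X + C (i : ℤ)) : ℤ[X])
      = X * (X + C (2 ^ m)) * coreG m := by
  obtain ⟨d, hd⟩ : ∃ d, 2 ^ m = d + 1 := ⟨2 ^ m - 1, by have := Nat.one_le_two_pow (n := m); omega⟩
  have hd' : (2 : ℤ) ^ m = d + 1 := by exact_mod_cast hd
  have e : 2 ^ (m + 1) = 2 * d + 1 + 1 := by rw [pow_succ]; omega
  have h : ∀ g : ℕ → ℤ[X], ∏ i ∈ range (2 * d + 1), g i
      = g d * ∏ i ∈ range d, (g i * g (2 * d - i)) := by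
    intro g
    rw [show 2 * d + 1 = d + (d + 1) by ring, prod_range_add, prod_range_succ', prod_mul_distrib,
      ← prod_range_reflect (fun i => g (d + (i + 1)))]
    have : ∏ i ∈ range d, g (d + (d - 1 - i + 1)) = ∏ i ∈ range d, g (2 * d - i) := by
      refine prod_congr rfl fun i hi => ?_
      have := mem_range.1 hi
      congr 1
      omega
    rw [this, add_zero]
    ac_rfl
  rw [e, prod_range_succ', h, coreG, coreP, Polynomial.prod_comp, show 2 ^ m - 1 = d by omega]
  have hprod : ∏ i ∈ range d, ((X + C (((i + 1 : ℕ)) : ℤ)) * (X + C ((2 * d - i + 1 : ℕ) : ℤ)))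
      = ∏ i ∈ range d, ((X + C (((i : ℤ) + 1) * (2 ^ (m + 1) - (i + 1)))).comp
          (X * (X + C (2 ^ (m + 1)))) : ℤ[X]) := by
    refine prod_congr rfl fun i hi => ?_
    have := mem_range.1 hi
    have hc : ((2 * d - i + 1 : ℕ) : ℤ) = 2 ^ (m + 1) - (i + 1) := by
      rw [pow_succ, hd']
      have : i + (2 * d - i + 1) = 2 * d + 1 := by omega
      have : (i : ℤ) + ((2 * d - i + 1 : ℕ) : ℤ) = 2 * d + 1 := by exact_mod_cast this
      linarith
    rw [hc]
    simp only [add_comp, X_comp, C_comp]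
    simp only [Nat.cast_add, Nat.cast_one, map_mul, map_add, map_sub, map_one]
    ring
  rw [hprod, hd']
  simp only [Nat.cast_add, Nat.cast_one, Nat.cast_zero, map_zero, add_zero]
  ring

lemma sF_cast_s3 (m k : ℕ) : (sF (2 ^ (m + 1)) k : ℤ) = (X * (X + C (2 ^ m)) * coreG m).coeff k := by
  rw [← stirling_factor, sF, ← Nat.coe_castRingHom, ← coeff_map, Polynomial.map_prod]
  simp

lemma sF_odd (m j : ℕ) (hj : j ≤ 2 ^ m - 1) :
    padicValNat 2 (sF (2 ^ (m + 1)) (2 * j + 1)) = m + V m j := by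
  apply Exact2.padicValNat_eq
  rw [sF_cast_s3, mul_assoc, coeff_X_mul, add_mul, coeff_add, coeff_C_mul,
    add_comm (coeff _ _)]
  refine ((Exact2.two_pow m).mul (coreG_even m j hj)).add_dvd ?_
  cases j with
  | zero => simp
  | succ j =>
    rw [show 2 * (j + 1) = 2 * j + 1 + 1 by ring, coeff_X_mul]
    refine coreG_odd m j _ fun l h1 h2 => ?_
    have h3 := V_fall m (j + 1) (l - (j + 1)) (by omega)
    rw [show j + 1 + (l - (j + 1)) = l by omega] at h3
    rw [show 2 * l - (2 * j + 1) = 2 * (l - (j + 1)) + 1 by omega]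
    have h4 : (m + 1) * (2 * (l - (j + 1)) + 1)
      = 2 * (l - (j + 1)) * m + 2 * (l - (j + 1)) + m + 1 := by ring
    omega

lemma sF_even (m j : ℕ) (hj : j ≤ 2 ^ m - 1) :
    padicValNat 2 (sF (2 ^ (m + 1)) (2 * j + 2)) = V m j := by
  apply Exact2.padicValNat_eq
  rw [sF_cast_s3, mul_assoc, coeff_X_mul, add_mul, coeff_add, coeff_C_mul, coeff_X_mul]
  refine (coreG_even m j hj).add_dvd ?_
  -- The factor `N / 2 = 2 ^ m` supplies the missing power of two; the truncated exponent covers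
  -- the case where it suffices alone.
  have h : (2 : ℤ) ^ (V m j + 1 - m) ∣ (coreG m).coeff (2 * j + 1) := by
    refine coreG_odd m j _ fun l h1 h2 => ?_
    have h3 := V_fall m j (l - j) (by omega)
    rw [show j + (l - j) = l by omega] at h3
    obtain ⟨t, ht⟩ : ∃ t, l = j + 1 + t := ⟨l - (j + 1), by omega⟩
    rw [show 2 * l - (2 * j + 1) = 2 * t + 1 by omega]
    rw [show l - j = t + 1 by omega] at h3
    have h4 : (m + 1) * (2 * t + 1) = 2 * (t + 1) * m + 2 * t + 1 - m := by
      have : (m + 1) * (2 * t + 1) + m = 2 * (t + 1) * m + 2 * t + 1 := by ring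
      omega
    omega
  have h5 := mul_dvd_mul_left ((2 : ℤ) ^ m) h
  rw [← pow_add] at h5
  exact (pow_dvd_pow 2 (by omega)).trans h5

theorem stmt3 (n k : ℕ) (hn : 1 ≤ n) (hk : 1 ≤ k) (hk' : k ≤ 2 ^ n) :
    padicValNat 2 (sF (2 ^ n) k) ≤ padicValNat 2 (sF (2 ^ n) 1) := by
  obtain ⟨m, rfl⟩ : ∃ m, n = m + 1 := ⟨n - 1, by omega⟩
  have hpow := Nat.pow_succ 2 m
  have hmax : ∀ j ≤ 2 ^ m - 1, V m j ≤ V m 0 := fun j hj => by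
    have h1 := V_le m j hj
    have h2 := V_zero m
    omega
  have h1 := sF_odd m 0 (Nat.zero_le _)
  rw [mul_zero, zero_add] at h1
  rw [h1]
  obtain ⟨j, rfl | rfl⟩ : ∃ j, k = 2 * j + 1 ∨ k = 2 * j + 2 := ⟨(k - 1) / 2, by omega⟩
  · rw [sF_odd m j (by omega)]
    exact Nat.add_le_add_left (hmax j (by omega)) m
  · rw [sF_even m j (by omega)]
    exact (hmax j (by omega)).trans (Nat.le_add_left _ _)
end

section
/- For every integer n ≥ 2 and every integer i with 1 ≤ i ≤ 2^(n-1), v₂(s(2^n, 2i - 1)) = v₂(s(2^n, 2i)) + n - 1, where s denotes the unsigned Stirling number of the first kind. -/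
/-!
Put `N = 2^(m+1)` and `M = 2^m`. The product `x(x+1)⋯(x+N-1)` has roots `0, -1, …, -(N-1)`, and
apart from `0` these are symmetric about `-M`. Writing `p_k` for the coefficients of
`P m = ∏_{0 ≤ j < M} (z - j²)`, this symmetry gives (`rising_eq`)

  `x(x+1)⋯(x+N-1) = x · ∑_{1 ≤ k ≤ M} p_k (x + M)^(2k-1)`,

so `s(N, 2i)` is `∑_{k ≥ i} p_k C(2k-1, 2i-1) M^(2(k-i))`, while `s(N, 2i-1)` is
`∑_{k ≥ i} p_k C(2k-1, 2i-2) M^(2(k-i)+1)`. In both sums the term `k = i` has strictly smallest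
2-adic valuation as soon as `v(p_i) < v(p_k) + 2(k-i)m` for all `k > i`. The leading terms are
`p_i` and `(2i-1) M p_i`, whose valuations differ by `m` (`emultiplicity_sF`).

The inequality is proved by induction on `m`, along with an exact recursion for the valuations.
Separating even and odd `j` gives `P (m+1) = S m * R m`, where the coefficients of `S m` are
`4^(M-k) p_k` and `R m = ∏ (z - j²)` runs over the odd `j < 2M`. Moreover
`R m ≡ (z-1)^M` modulo `2M` (`R_congr`), so for `1 ≤ b ≤ M` the `b`-th coefficient of `R m` has the
valuation of `C(M, b)`, namely `m - v(b)`. In every coefficient of the product a single term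
dominates (`emultiplicity_coeff_P_succ`): the `k`-th coefficient of `P (m+1)` has valuation
`v(p_k) + 2(M-k)` for `k ≤ M` and `m - v(k-M)` for `k > M`. The structure `Good` collects the
inequalities that are needed to establish this dominance and that the recursion preserves.
-/


open Polynomial Finset

namespace StirlingTwoPow

/-! ### Exact powers of two -/

lemma pow_dvd_of_emultiplicity {x : ℤ} {e d : ℕ} (hx : emultiplicity 2 x = e) (h : d ≤ e) :
    (2 : ℤ) ^ d ∣ x := by
  rw [pow_dvd_iff_le_emultiplicity, hx]
  exact_mod_cast h

lemma emultiplicity_add_eq {x y : ℤ} {e : ℕ} (hx : emultiplicity 2 x = e)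
    (hy : (2 : ℤ) ^ (e + 1) ∣ y) : emultiplicity 2 (x + y) = e := by
  rw [pow_dvd_iff_le_emultiplicity] at hy
  rw [add_comm, emultiplicity_add_of_gt, hx]
  rw [hx]
  refine lt_of_lt_of_le ?_ hy
  exact_mod_cast Nat.lt_succ_self e

lemma emultiplicity_sum_eq {ι : Type*} [DecidableEq ι] {s : Finset ι} {f : ι → ℤ} {a : ι} {e : ℕ}
    (ha : a ∈ s) (hx : emultiplicity 2 (f a) = e)
    (h : ∀ b ∈ s, b ≠ a → (2 : ℤ) ^ (e + 1) ∣ f b) : emultiplicity 2 (∑ b ∈ s, f b) = e := by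
  rw [← Finset.add_sum_erase s f ha]
  refine emultiplicity_add_eq hx (Finset.dvd_sum fun b hb => ?_)
  exact h b (Finset.mem_of_mem_erase hb) (Finset.ne_of_mem_erase hb)

lemma emultiplicity_mul_eq {x y : ℤ} {e f : ℕ} (hx : emultiplicity 2 x = e)
    (hy : emultiplicity 2 y = f) : emultiplicity 2 (x * y) = (e + f : ℕ) := by
  rw [emultiplicity_mul Int.prime_two, hx, hy]
  push_cast; rfl

lemma emultiplicity_two_pow (e : ℕ) : emultiplicity 2 ((2 : ℤ) ^ e) = e :=
  emultiplicity_pow_self_of_prime Int.prime_two e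

lemma emultiplicity_odd {x : ℤ} (hx : Odd x) : emultiplicity 2 x = (0 : ℕ) := by
  rw [Nat.cast_zero, emultiplicity_eq_zero, ← even_iff_two_dvd, Int.not_even_iff_odd]
  exact hx

lemma padicValNat_of_emultiplicity {x e : ℕ} (hx : emultiplicity 2 (x : ℤ) = e) :
    padicValNat 2 x = e := by
  have h : emultiplicity 2 x = e := by rw [← hx]; exact_mod_cast (Int.natCast_emultiplicity 2 x).symm
  have h0 : x ≠ 0 := by
    rintro rfl
    simp at h
  rw [← padicValNat_eq_emultiplicity h0] at h
  exact_mod_cast h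

lemma padicValNat_two_lt {b : ℕ} (hb : b ≠ 0) : padicValNat 2 b < b :=
  (Nat.lt_two_pow_self).trans_le (Nat.le_of_dvd (Nat.pos_of_ne_zero hb) pow_padicValNat_dvd)

lemma padicValNat_le_of_le_two_pow {b m : ℕ} (h : b ≤ 2 ^ m) : padicValNat 2 b ≤ m := by
  rcases Nat.eq_zero_or_pos b with rfl | hb
  · simp
  · exact (Nat.pow_le_pow_iff_right (by norm_num)).1
      ((Nat.le_of_dvd hb pow_padicValNat_dvd).trans h)

lemma emultiplicity_choose {m b : ℕ} (hb : b ≠ 0) (h : b ≤ 2 ^ m) :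
    emultiplicity 2 (((2 ^ m).choose b : ℕ) : ℤ) = (m - padicValNat 2 b : ℕ) := by
  have h1 := Nat.prime_two.emultiplicity_choose_prime_pow_add_emultiplicity h hb
  have hc : (2 ^ m).choose b ≠ 0 := (Nat.choose_pos h).ne'
  rw [← padicValNat_eq_emultiplicity hb, ← padicValNat_eq_emultiplicity hc] at h1
  have h2 : padicValNat 2 ((2 ^ m).choose b) + padicValNat 2 b = m := by exact_mod_cast h1
  have h3 : emultiplicity 2 (((2 ^ m).choose b : ℕ) : ℤ) =
      emultiplicity 2 ((2 ^ m).choose b) := by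
    exact_mod_cast Int.natCast_emultiplicity 2 ((2 ^ m).choose b)
  rw [h3, ← padicValNat_eq_emultiplicity hc]
  congr 1
  omega

/-! ### The polynomials whose roots are squares -/

/-- `P m = ∏_{0 ≤ j < 2^m} (X - j²)`. -/
noncomputable def P (m : ℕ) : ℤ[X] := ∏ j ∈ range (2 ^ m), (X - C ((j : ℤ) ^ 2))

/-- `R m = ∏ (X - j²)` over the `2^m` odd `j` below `2^(m+1)`. -/
noncomputable def R (m : ℕ) : ℤ[X] := ∏ k ∈ range (2 ^ m), (X - C ((2 * (k : ℤ) + 1) ^ 2))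

/-- `S m = ∏ (X - j²)` over the `2^m` even `j` with `0 ≤ j < 2^(m+1)`. -/
noncomputable def S (m : ℕ) : ℤ[X] := ∏ k ∈ range (2 ^ m), (X - C ((2 * (k : ℤ)) ^ 2))

lemma prod_range_two_mul {A : Type*} [CommMonoid A] (f : ℕ → A) (n : ℕ) :
    ∏ j ∈ range (2 * n), f j = (∏ k ∈ range n, f (2 * k)) * ∏ k ∈ range n, f (2 * k + 1) := by
  rw [← Finset.prod_mul_distrib]
  induction n with
  | zero => simp
  | succ n ih =>
    rw [show 2 * (n + 1) = 2 * n + 1 + 1 by ring, prod_range_succ, prod_range_succ, ih,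
      prod_range_succ, mul_assoc]

lemma P_succ (m : ℕ) : P (m + 1) = S m * R m := by
  rw [P, pow_succ, mul_comm (2 ^ m) 2, prod_range_two_mul, S, R]
  push_cast
  rfl

lemma natDegree_P (m : ℕ) : (P m).natDegree = 2 ^ m := by
  rw [P, natDegree_finsetProd_X_sub_C_eq_card, card_range]

lemma natDegree_R (m : ℕ) : (R m).natDegree = 2 ^ m := by
  rw [R, natDegree_finsetProd_X_sub_C_eq_card, card_range]

lemma coeff_P_zero (m : ℕ) : (P m).coeff 0 = 0 := by
  rw [coeff_zero_eq_eval_zero, P, eval_prod]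
  refine Finset.prod_eq_zero (i := 0) (by simp) ?_
  simp

lemma coeff_S (m k : ℕ) : (S m).coeff k * 4 ^ k = 4 ^ 2 ^ m * (P m).coeff k := by
  have h : (S m).comp (C 4 * X) = C (4 ^ 2 ^ m) * P m := by
    rw [S, P, Polynomial.prod_comp, C_pow, ← card_range (2 ^ m), ← prod_const, card_range,
      ← prod_mul_distrib]
    refine prod_congr rfl fun k _ => ?_
    rw [sub_comp, X_comp, C_comp]
    simp only [mul_pow, map_mul, map_pow]
    rw [show (C (4 : ℤ) : ℤ[X]) = 4 from rfl, show (C (2 : ℤ) : ℤ[X]) = 2 from rfl]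
    ring
  rw [← comp_C_mul_X_coeff, h, coeff_C_mul]

lemma dvd_prod_sub_prod {A ι : Type*} [CommRing A] (d : A) (s : Finset ι) (f g : ι → A)
    (h : ∀ i ∈ s, d ∣ f i - g i) : d ∣ ∏ i ∈ s, f i - ∏ i ∈ s, g i := by
  rw [← Ideal.mem_span_singleton, ← Ideal.Quotient.eq, map_prod, map_prod]
  refine prod_congr rfl fun i hi => ?_
  rw [Ideal.Quotient.eq, Ideal.mem_span_singleton]
  exact h i hi

/-- Shifting `k` by `2^m` gives `R (m+1) ≡ R m ^ 2` modulo `2^(m+2)`, and squaring a congruence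
modulo `2^(m+1)` gains a factor of two. -/
lemma R_congr (m : ℕ) : (C (2 ^ (m + 1)) : ℤ[X]) ∣ R m - (X - 1) ^ 2 ^ m := by
  induction m with
  | zero => simp [R]
  | succ m ih =>
    have h1 : (C (2 ^ (m + 2)) : ℤ[X]) ∣
        ∏ k ∈ range (2 ^ m), (X - C ((2 * ((2 ^ m + k : ℕ) : ℤ) + 1) ^ 2)) - R m := by
      refine dvd_prod_sub_prod _ _ _ _ fun k _ => ?_
      rw [sub_sub_sub_cancel_left, ← C_sub]
      refine map_dvd C ⟨-(2 * k + 1 + 2 ^ m), ?_⟩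
      push_cast
      ring
    obtain ⟨t, ht⟩ := ih
    obtain ⟨u, hu⟩ := h1
    have h2 : R (m + 1) = R m * (R m + C (2 ^ (m + 2)) * u) := by
      rw [← hu, add_sub_cancel]
      conv_lhs => rw [R, pow_succ, mul_two, prod_range_add]
      rw [R]
    have h3 : R m = (X - 1) ^ 2 ^ m + C (2 ^ (m + 1)) * t := by rw [← ht]; ring
    refine ⟨R m * u + (X - 1) ^ 2 ^ m * t + C (2 ^ m) * t ^ 2, ?_⟩
    have h4 : (X - 1 : ℤ[X]) ^ 2 ^ (m + 1) = ((X - 1) ^ 2 ^ m) ^ 2 := by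
      rw [← pow_mul, pow_succ]
    rw [h2, h4]
    have h5 : R m * R m = ((X - 1) ^ 2 ^ m + C (2 ^ (m + 1)) * t) ^ 2 := by rw [← h3]; ring
    rw [mul_add, h5]
    simp only [C_pow]
    rw [show (C (2 : ℤ) : ℤ[X]) = 2 from rfl]
    ring

lemma coeff_R_sub (m b : ℕ) :
    (2 : ℤ) ^ (m + 1) ∣ (R m).coeff b - (-1) ^ (2 ^ m - b) * ((2 ^ m).choose b : ℤ) := by
  have h := (C_dvd_iff_dvd_coeff _ _).1 (R_congr m) b
  rw [coeff_sub, sub_eq_add_neg X, ← C_1, ← C_neg, coeff_X_add_C_pow] at h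
  exact h

lemma emultiplicity_coeff_R {m b : ℕ} (hb : b ≠ 0) (h : b ≤ 2 ^ m) :
    emultiplicity 2 ((R m).coeff b) = (m - padicValNat 2 b : ℕ) := by
  have h1 : emultiplicity 2 ((-1) ^ (2 ^ m - b) * ((2 ^ m).choose b : ℤ)) =
      (m - padicValNat 2 b : ℕ) := by
    have := emultiplicity_mul_eq (emultiplicity_odd (x := (-1) ^ (2 ^ m - b))
      (Odd.pow (by decide))) (emultiplicity_choose hb h)
    rwa [zero_add] at this
  have h2 := emultiplicity_add_eq h1 ((pow_dvd_pow 2 (by omega)).trans (coeff_R_sub m b))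
  rwa [add_sub_cancel] at h2

lemma emultiplicity_coeff_R_zero (m : ℕ) : emultiplicity 2 ((R m).coeff 0) = (0 : ℕ) := by
  have h1 : emultiplicity 2 ((-1) ^ (2 ^ m - 0) * ((2 ^ m).choose 0 : ℤ)) = (0 : ℕ) := by
    refine emultiplicity_odd ?_
    rw [Nat.choose_zero_right, Nat.cast_one, mul_one]
    exact Odd.pow (by decide)
  have h2 := emultiplicity_add_eq h1 ((pow_dvd_pow 2 (by omega)).trans (coeff_R_sub m 0))
  rwa [add_sub_cancel] at h2

/-! ### Valuations of the coefficients of `P` -/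

/-- The function `w` gives the exact 2-adic valuations of the coefficients of `P m` of index
`1, …, 2^m`, and grows slowly enough for the recursion `P (m+1) = S m * R m` to preserve this
description; `gap` is what the passage to Stirling numbers uses. -/
structure Good (m : ℕ) (w : ℕ → ℕ) : Prop where
  val : ∀ k, 1 ≤ k → k ≤ 2 ^ m → emultiplicity 2 ((P m).coeff k) = w k
  top : w (2 ^ m) = 0
  upper : ∀ a c, 1 ≤ a → a < c → c ≤ 2 ^ m → w c ≤ w a + m
  lower : ∀ a d, 1 ≤ a → 1 ≤ d → a + d = 2 ^ m → m + 1 ≤ w a + 2 * d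
  gap : ∀ i r, 1 ≤ i → 1 ≤ r → i + r ≤ 2 ^ m → w i < w (i + r) + 2 * r * m

lemma emultiplicity_coeff_S {m k : ℕ} {w : ℕ → ℕ} (hw : Good m w) (h1 : 1 ≤ k) (h2 : k ≤ 2 ^ m) :
    emultiplicity 2 ((S m).coeff k) = (w k + 2 * (2 ^ m - k) : ℕ) := by
  have h : (S m).coeff k = (P m).coeff k * 2 ^ (2 * (2 ^ m - k)) := by
    have h3 := coeff_S m k
    have h4 : (4 : ℤ) ^ 2 ^ m = 4 ^ (2 ^ m - k) * 4 ^ k := by rw [← pow_add, Nat.sub_add_cancel h2]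
    have h5 : (4 : ℤ) ^ k ≠ 0 := by positivity
    apply mul_right_cancel₀ h5
    rw [h3, h4, pow_mul]
    norm_num
    ring
  rw [h]
  exact emultiplicity_mul_eq (hw.val k h1 h2) (emultiplicity_two_pow _)

lemma coeff_S_zero (m : ℕ) : (S m).coeff 0 = 0 := by
  have := coeff_S m 0
  rw [coeff_P_zero] at this
  simpa using this

lemma coeff_S_eq_zero {m k : ℕ} (h : 2 ^ m < k) : (S m).coeff k = 0 := by
  have := coeff_S m k
  rw [coeff_eq_zero_of_natDegree_lt (p := P m) (by rwa [natDegree_P])] at this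
  simpa using this

/-- Of the products `S_a R_b` with `a + b = k` contributing to the `k`-th coefficient of
`P (m+1)`, the one with `a = min k (2^m)` has strictly smallest valuation. -/
lemma emultiplicity_coeff_P_succ {m k : ℕ} {w : ℕ → ℕ} (hw : Good m w) (h1 : 1 ≤ k)
    (h2 : k ≤ 2 ^ (m + 1)) : emultiplicity 2 ((P (m + 1)).coeff k) =
      (if k ≤ 2 ^ m then w k + 2 * (2 ^ m - k) else m - padicValNat 2 (k - 2 ^ m) : ℕ) := by
  rw [P_succ, coeff_mul]
  -- Only index pairs inside the supports of both factors need a valuation estimate.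
  have key : ∀ e : ℕ, ∀ x ∈ antidiagonal k,
      (1 ≤ x.1 → x.1 ≤ 2 ^ m → x.2 ≠ 0 → x.2 ≤ 2 ^ m →
        e + 1 ≤ w x.1 + 2 * (2 ^ m - x.1) + (m - padicValNat 2 x.2)) →
      x.2 ≠ 0 → (2 : ℤ) ^ (e + 1) ∣ (S m).coeff x.1 * (R m).coeff x.2 := by
    intro e x hx h hb
    rcases Nat.eq_zero_or_pos x.1 with ha | ha
    · rw [ha, coeff_S_zero, zero_mul]; exact dvd_zero _
    rcases lt_or_ge (2 ^ m) x.1 with ha' | ha'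
    · rw [coeff_S_eq_zero ha', zero_mul]; exact dvd_zero _
    rcases lt_or_ge (2 ^ m) x.2 with hb' | hb'
    · rw [coeff_eq_zero_of_natDegree_lt (p := R m) (by rwa [natDegree_R]), mul_zero]
      exact dvd_zero _
    exact pow_dvd_of_emultiplicity
      (emultiplicity_mul_eq (emultiplicity_coeff_S hw ha ha') (emultiplicity_coeff_R hb hb'))
      (h ha ha' hb hb')
  split_ifs with hk
  · refine emultiplicity_sum_eq (a := (k, 0)) (by simp) ?_ ?_
    · have := emultiplicity_mul_eq (emultiplicity_coeff_S hw h1 hk) (emultiplicity_coeff_R_zero m)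
      rwa [add_zero] at this
    · rintro ⟨a, b⟩ hx hne
      have hab : a + b = k := HasAntidiagonal.mem_antidiagonal.1 hx
      refine key _ _ hx ?_ ?_
      · intro ha1 ha2 hb1 hb2
        have := hw.upper a k ha1 (by dsimp only at *; omega) hk
        have := padicValNat_two_lt hb1
        have := padicValNat_le_of_le_two_pow hb2
        dsimp only at *
        omega
      · rintro rfl
        exact hne (by simpa using hab)
  · push Not at hk
    have hk' : k - 2 ^ m ≤ 2 ^ m := by rw [pow_succ] at h2; omega
    refine emultiplicity_sum_eq (a := (2 ^ m, k - 2 ^ m)) ?_ ?_ ?_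
    · rw [HasAntidiagonal.mem_antidiagonal]; omega
    · have h3 := emultiplicity_mul_eq (emultiplicity_coeff_S hw Nat.one_le_two_pow le_rfl)
        (emultiplicity_coeff_R (by omega) hk')
      rwa [hw.top, Nat.sub_self, mul_zero, zero_add, zero_add] at h3
    · rintro ⟨a, b⟩ hx hne
      have hab : a + b = k := HasAntidiagonal.mem_antidiagonal.1 hx
      rcases Nat.eq_zero_or_pos b with rfl | hb
      · rw [coeff_S_eq_zero (by dsimp only; omega), zero_mul]; exact dvd_zero _
      refine key _ _ hx ?_ (by dsimp only; omega)
      intro ha1 ha2 hb1 hb2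
      dsimp only at *
      have ha3 : a ≠ 2 ^ m := by
        rintro rfl
        exact hne (by rw [← hab, Nat.add_sub_cancel_left])
      have := hw.lower a (2 ^ m - a) ha1 (by omega) (by omega)
      omega

lemma good_zero : Good 0 (fun _ => 0) where
  val k h1 h2 := by
    obtain rfl : k = 1 := by simp at h2; omega
    simpa [P] using emultiplicity_odd (x := 1) odd_one
  top := rfl
  upper a c h1 h2 h3 := Nat.zero_le _
  lower a d h1 h2 h3 := by simp at h3; omega
  gap i r h1 h2 h3 := by simp at h3; omega

lemma good_succ {m : ℕ} {w : ℕ → ℕ} (hw : Good m w) : Good (m + 1) (fun k =>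
    if k ≤ 2 ^ m then w k + 2 * (2 ^ m - k) else m - padicValNat 2 (k - 2 ^ m)) where
  val k h1 h2 := emultiplicity_coeff_P_succ hw h1 h2
  top := by
    have h : 2 ^ (m + 1) = 2 ^ m + 2 ^ m := by ring
    have := Nat.one_le_two_pow (n := m)
    rw [if_neg (by omega), h, Nat.add_sub_cancel, padicValNat.prime_pow, Nat.sub_self]
  upper a c h1 h2 h3 := by
    by_cases hc : c ≤ 2 ^ m
    · have := hw.upper a c h1 h2 hc
      rw [if_pos hc, if_pos (by omega)]
      omega
    · rw [if_neg hc]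
      omega
  lower a d h1 h2 h3 := by
    have h : 2 ^ (m + 1) = 2 ^ m + 2 ^ m := by ring
    have hm : m < 2 ^ m := Nat.lt_two_pow_self
    split_ifs with ha
    · omega
    · -- Here `a - 2^m` and `d` add up to `2^m`, so they have the same valuation, which is
      -- less than `d`.
      have hd : d < 2 ^ m := by omega
      have hval : padicValNat 2 (a - 2 ^ m) ≤ padicValNat 2 d := by
        rw [← padicValNat_dvd_iff_le (by omega)]
        have e : d = 2 ^ m - (a - 2 ^ m) := by omega
        rw [e]
        exact Nat.dvd_sub (pow_dvd_pow 2 (padicValNat_le_of_le_two_pow (by omega)))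
          pow_padicValNat_dvd
      have := padicValNat_two_lt (b := d) (by omega)
      omega
  gap i r h1 h2 h3 := by
    have hr : m + 1 ≤ r * (m + 1) := Nat.le_mul_of_pos_left _ h2
    have e : 2 * r * (m + 1) = 2 * r * m + 2 * r := by ring
    have e' : 2 * r * (m + 1) = 2 * (r * (m + 1)) := by ring
    by_cases hi : i ≤ 2 ^ m
    · rw [if_pos hi]
      by_cases hir : i + r ≤ 2 ^ m
      · have := hw.gap i r h1 h2 hir
        rw [if_pos hir]
        omega
      · rw [if_neg hir]
        rcases hi.eq_or_lt with rfl | hi'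
        · rw [hw.top]; omega
        · -- Compare with the index `2^m`, where the valuation is zero.
          have h4 := hw.gap i (2 ^ m - i) h1 (by omega) (by omega)
          rw [show i + (2 ^ m - i) = 2 ^ m by omega, hw.top] at h4
          have h5 : (2 ^ m - i) * m ≤ r * m := Nat.mul_le_mul_right _ (by omega)
          have e1 : 2 * (2 ^ m - i) * m = 2 * ((2 ^ m - i) * m) := by ring
          have e2 : 2 * r * m = 2 * (r * m) := by ring
          omega
    · rw [if_neg hi]
      omega

lemma exists_good (m : ℕ) : ∃ w, Good m w := by
  induction m with
  | zero => exact ⟨_, good_zero⟩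
  | succ m ih =>
    obtain ⟨w, hw⟩ := ih
    exact ⟨_, good_succ hw⟩

/-! ### Stirling numbers from the coefficients of `P` -/

/-- With `y = x + 2^m`, the rising product `x(x+1)⋯(x+2^(m+1)-1)` times `y` is `x` times
`∏_{0 ≤ j < 2^m} (y² - j²)`. -/
lemma rising_mul (m : ℕ) :
    (∏ i ∈ range (2 ^ (m + 1)), (X + C (i : ℤ))) * (X + C (2 ^ m)) =
      X * (P m).comp ((X + C (2 ^ m)) ^ 2) := by
  have h1 : (P m).comp ((X + C (2 ^ m)) ^ 2) =
      (∏ j ∈ range (2 ^ m), (X + C (((j + 1 : ℕ) : ℤ)))) *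
        ∏ j ∈ range (2 ^ m), (X + C (((2 ^ m + j : ℕ) : ℤ))) := by
    rw [← prod_range_reflect (fun j => (X + C (((j + 1 : ℕ) : ℤ)))), ← prod_mul_distrib, P,
      Polynomial.prod_comp]
    refine prod_congr rfl fun j hj => ?_
    have hj' := mem_range.1 hj
    rw [show 2 ^ m - 1 - j + 1 = 2 ^ m - j by omega, Nat.cast_sub hj'.le]
    rw [sub_comp, X_comp, C_comp]
    simp only [map_pow, map_sub, map_add, Nat.cast_add, Nat.cast_pow, map_natCast, Nat.cast_ofNat]
    ring
  have h2 := prod_range_succ (fun j : ℕ => (X + C (j : ℤ))) (2 ^ m)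
  rw [prod_range_succ'] at h2
  rw [h1, pow_succ, mul_two, prod_range_add]
  simp only [Nat.cast_zero, C_0, add_zero, Nat.cast_pow, Nat.cast_ofNat] at h2
  rw [← mul_assoc, mul_comm X, h2]
  ring

lemma rising_eq (m : ℕ) :
    ∏ i ∈ range (2 ^ (m + 1)), (X + C (i : ℤ)) =
      X * ∑ k ∈ range (2 ^ m), C ((P m).coeff (k + 1)) * (X + C (2 ^ m)) ^ (2 * k + 1) := by
  apply mul_right_cancel₀ (X_add_C_ne_zero ((2 : ℤ) ^ m))
  rw [rising_mul, comp, eval₂_eq_sum_range' C (n := 2 ^ m + 1) (by rw [natDegree_P]; omega),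
    sum_range_succ', coeff_P_zero, C_0, zero_mul, add_zero, mul_assoc, sum_mul]
  congr 1
  refine sum_congr rfl fun k _ => ?_
  rw [← pow_mul]
  ring

lemma sF_eq (m j : ℕ) : (sF (2 ^ (m + 1)) (j + 1) : ℤ) =
    ∑ k ∈ range (2 ^ m), (P m).coeff (k + 1) *
      ((2 ^ m) ^ (2 * k + 1 - j) * ((2 * k + 1).choose j : ℤ)) := by
  have h : (sF (2 ^ (m + 1)) (j + 1) : ℤ) =
      (∏ i ∈ range (2 ^ (m + 1)), (X + C (i : ℤ))).coeff (j + 1) := by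
    rw [sF, ← Nat.coe_castRingHom, ← coeff_map, Polynomial.map_prod]
    simp
  rw [h, rising_eq, coeff_X_mul, finsetSum_coeff]
  refine sum_congr rfl fun k _ => ?_
  rw [coeff_C_mul, coeff_X_add_C_pow]

/-- By `Good.gap`, the summand of `sF_eq` with `k = i` dominates when `j` is `2i + 1` or `2i`. -/
lemma emultiplicity_sF {m i j t : ℕ} {w : ℕ → ℕ} (hw : Good m w) (hi : i < 2 ^ m)
    (hj : j + t = 2 * i + 1) (ht : t ≤ 1) :
    emultiplicity 2 (sF (2 ^ (m + 1)) (j + 1) : ℤ) = (w (i + 1) + t * m : ℕ) := by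
  rw [sF_eq]
  refine emultiplicity_sum_eq (a := i) (mem_range.2 hi) ?_ ?_
  · refine emultiplicity_mul_eq (hw.val (i + 1) (by omega) hi) ?_
    rw [show 2 * i + 1 - j = t by omega, ← pow_mul, mul_comm m t]
    have hodd : Odd (((2 * i + 1).choose j : ℕ) : ℤ) := by
      interval_cases t
      · obtain rfl : j = 2 * i + 1 := by omega
        simp
      · obtain rfl : j = 2 * i := by omega
        rw [Nat.choose_succ_self_right]
        exact ⟨i, by push_cast; ring⟩
    exact emultiplicity_mul_eq (emultiplicity_two_pow _) (emultiplicity_odd hodd)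
  · intro k hk hne
    have hk' := mem_range.1 hk
    rcases lt_or_gt_of_ne hne with hlt | hgt
    · rw [Nat.choose_eq_zero_of_lt (by omega)]
      simp
    · obtain ⟨r, rfl⟩ : ∃ r, k = i + r := ⟨k - i, by omega⟩
      have hgap := hw.gap (i + 1) r (by omega) (by omega) (by omega)
      rw [show 2 * (i + r) + 1 - j = 2 * r + t by omega, ← pow_mul, ← mul_assoc]
      refine Dvd.dvd.mul_right ?_ _
      refine pow_dvd_of_emultiplicity
        (emultiplicity_mul_eq (hw.val (i + r + 1) (by omega) hk') (emultiplicity_two_pow _)) ?_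
      rw [show i + 1 + r = i + r + 1 by ring] at hgap
      have e : m * (2 * r + t) = 2 * r * m + t * m := by ring
      omega

end StirlingTwoPow

open StirlingTwoPow in
theorem stmt9 (n i : ℕ) (hn : 2 ≤ n) (hi : 1 ≤ i) (hi' : i ≤ 2 ^ (n - 1)) :
    (padicValNat 2 (sF (2 ^ n) (2 * i - 1)) : ℤ) =
      padicValNat 2 (sF (2 ^ n) (2 * i)) + (n : ℤ) - 1 := by
  obtain ⟨m, rfl⟩ : ∃ m, n = m + 1 := ⟨n - 1, by omega⟩
  obtain ⟨i, rfl⟩ : ∃ l, i = l + 1 := ⟨i - 1, by omega⟩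
  obtain ⟨w, hw⟩ := exists_good m
  have hi2 : i < 2 ^ m := by simpa using hi'
  have h1 := padicValNat_of_emultiplicity
    (emultiplicity_sF hw hi2 (j := 2 * i) (t := 1) (by omega) le_rfl)
  have h0 := padicValNat_of_emultiplicity
    (emultiplicity_sF hw hi2 (j := 2 * i + 1) (t := 0) (by omega) (by omega))
  rw [show 2 * (i + 1) - 1 = 2 * i + 1 by omega, show 2 * (i + 1) = 2 * i + 1 + 1 by ring, h1, h0]
  push_cast
  ring
end
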